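/- Let q ∈ ℕ∪{0}, d, d*, K ∈ ℕ, β ∈ (0,∞), r ∈ (1/2,∞), Λ ∈ [1,∞). Assume d*·q ≤ K·q and d* ≤ d. Set e := β·(min{1,β})^q. Then there exists a constant c10 ∈ (0,∞) depending only on (d*,β,q,r) such that for every n ∈ ℕ: inf_{f̂_n} sup{E_{P^⊗n}[E_P(f̂_n)] : P ∈ H^{d,β,r,Λ}_{q,K,d*}} ≥ c10·(1/n)^{e/(d* + 2e)}, where the infimum is over all estimators based on the i.i.d. sample of size n. -/

import Mathlib

open MeasureTheory ENNReal Set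

noncomputable section

namespace ZZS

/-! ## Basic geometry -/

/-- The closed unit cube `[0,1]^m`. -/
def cube (m : ℕ) : Set (Fin m → ℝ) := Set.univ.pi fun _ => Set.Icc (0 : ℝ) 1

/-- The open unit cube `(0,1)^m`. -/
def cubeo (m : ℕ) : Set (Fin m → ℝ) := Set.univ.pi fun _ => Set.Ioo (0 : ℝ) 1

/-- The label set `{-1, 1} ⊆ ℝ`. -/
def labels : Set ℝ := {-1, 1}

/-- Euclidean distance on `Fin m → ℝ`. -/
def e2 {m : ℕ} (x z : Fin m → ℝ) : ℝ := Real.sqrt (∑ i, (x i - z i) ^ 2)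

/-! ## Multi-index partial derivatives and Hölder balls -/

/-- Iterated partial derivative along a list of coordinate directions. -/
def pderivList {m : ℕ} : List (Fin m) → ((Fin m → ℝ) → ℝ) → (Fin m → ℝ) → ℝ
  | [], f => f
  | i :: l, f => pderivList l fun x => fderiv ℝ f x (Pi.single i 1)

/-- The canonical list of directions attached to a multi-index. -/
def idxList {m : ℕ} (u : Fin m → ℕ) : List (Fin m) :=
  (List.finRange m).flatMap fun i => List.replicate (u i) i

/-- The partial derivative `D^u f` for a multi-index `u`. -/
def Dm {m : ℕ} (u : Fin m → ℕ) (f : (Fin m → ℝ) → ℝ) : (Fin m → ℝ) → ℝ :=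
  pderivList (idxList u) f

/-- The order `‖u‖₁` of a multi-index `u`. -/
def mord {m : ℕ} (u : Fin m → ℕ) : ℕ := ∑ i, u i

/-- The Hölder-`β` norm of `f`, suprema taken over the set `S` (value in `ℝ≥0∞`). -/
def holderNormOn (m : ℕ) (β : ℝ) (S : Set (Fin m → ℝ)) (f : (Fin m → ℝ) → ℝ) : ℝ≥0∞ :=
  (⨆ (u : Fin m → ℕ) (_ : (mord u : ℝ) < β) (x ∈ S), ENNReal.ofReal |Dm u f x|) +
    ⨆ (u : Fin m → ℕ) (_ : (⌈β⌉ : ℝ) - 1 ≤ (mord u : ℝ) ∧ (mord u : ℝ) < β)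
      (x ∈ S) (z ∈ S) (_ : x ≠ z),
      ENNReal.ofReal |Dm u f x - Dm u f z| /
        ENNReal.ofReal (e2 x z) ^ (β + 1 - (⌈β⌉ : ℝ))

/-- `⌈β - 1⌉`, the number of derivatives required for Hölder-`β` smoothness. -/
def smoothOrder (β : ℝ) : ℕ := ⌈β - 1⌉₊

/-- The Hölder ball `B^β_r([0,1]^m)`:  `⌈β-1⌉`-times continuously differentiable functions on
the interior of the cube (with uniformly continuous derivatives, so that they extend
continuously), with Hölder-`β` norm at most `r`. -/
def HolderBall (m : ℕ) (β r : ℝ) : Set ((Fin m → ℝ) → ℝ) :=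
  {f | ContinuousOn f (cube m) ∧
    ContDiffOn ℝ (smoothOrder β : ℕ∞) f (cubeo m) ∧
    (∀ u : Fin m → ℕ, (mord u : ℝ) < β → UniformContinuousOn (Dm u f) (cubeo m)) ∧
    holderNormOn m β (cubeo m) f ≤ ENNReal.ofReal r}

/-! ## Compositional function classes -/

/-- `G^H_m(dstar, β, r)`: Hölder-`β` functions of `dstar` of the `m` coordinates. -/
def GH (m dstar : ℕ) (β r : ℝ) : Set ((Fin m → ℝ) → ℝ) :=
  {f | ∃ (e : Fin dstar → Fin m) (g : (Fin dstar → ℝ) → ℝ),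
    StrictMono e ∧ g ∈ HolderBall dstar β r ∧ ∀ x ∈ cube m, f x = g fun j => x (e j)}

/-- `G^M_m(dmax)`: maxima of at most `dmax` coordinates. -/
def GM (m dmax : ℕ) : Set ((Fin m → ℝ) → ℝ) :=
  {f | ∃ (I : Finset (Fin m)) (hI : I.Nonempty), I.card ≤ dmax ∧
    ∀ x ∈ cube m, f x = I.sup' hI fun i => x i}

/-- The compositional class `G^CHOM_d(q, K, dmax, dstar, β, r)`. -/
def GCHOM (K dmax dstar : ℕ) (β r : ℝ) : ℕ → (d : ℕ) → Set ((Fin d → ℝ) → ℝ)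
  | 0, d => {f | ∃ h ∈ GH d dstar β r ∪ GM d dmax, ∀ x ∈ cube d, f x = h x}
  | q + 1, d =>
    {f | ∃ (H : (Fin d → ℝ) → Fin K → ℝ) (g : (Fin K → ℝ) → ℝ),
      (∀ j, (fun x => H x j) ∈ GH d dstar β r ∪ GM d dmax) ∧
      (∀ x ∈ cube d, H x ∈ cube K) ∧
      g ∈ GCHOM K dmax dstar β r q K ∧ ∀ x ∈ cube d, f x = g (H x)}

/-- The compositional class `G^CH_d(q, K, dstar, β, r)` (no max-value components). -/
def GCH (K dstar : ℕ) (β r : ℝ) : ℕ → (d : ℕ) → Set ((Fin d → ℝ) → ℝ)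
  | 0, d => {f | ∃ h ∈ GH d dstar β r, ∀ x ∈ cube d, f x = h x}
  | q + 1, d =>
    {f | ∃ (H : (Fin d → ℝ) → Fin K → ℝ) (g : (Fin K → ℝ) → ℝ),
      (∀ j, (fun x => H x j) ∈ GH d dstar β r) ∧
      (∀ x ∈ cube d, H x ∈ cube K) ∧
      g ∈ GCH K dstar β r q K ∧ ∀ x ∈ cube d, f x = g (H x)}

/-! ## Losses, risks, and data distributions -/

/-- The sign function (`sgn 0 = 1`). -/
def sgn (t : ℝ) : ℝ := if 0 ≤ t then 1 else -1

/-- The hinge loss. -/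
def hinge (t : ℝ) : ℝ := max 0 (1 - t)

/-- The truncation operator `T_F`. -/
def trunc (F t : ℝ) : ℝ := min F (max (-F) t)

/-- The joint distribution `P_{η,Q}` on `[0,1]^d × {-1,1}` with input marginal `Q` and
conditional class probability function `η`. -/
def jointMeasure {d : ℕ} (η : (Fin d → ℝ) → ℝ) (Q : Measure (Fin d → ℝ)) :
    Measure ((Fin d → ℝ) × ℝ) :=
  Q.bind fun x =>
    ENNReal.ofReal (η x) • Measure.dirac (x, (1 : ℝ)) +
      ENNReal.ofReal (1 - η x) • Measure.dirac (x, (-1 : ℝ))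

/-- The 0-1 risk (misclassification error). -/
def risk01 {d : ℕ} (P : Measure ((Fin d → ℝ) × ℝ)) (f : (Fin d → ℝ) → ℝ) : ℝ :=
  (P {p | sgn (f p.1) ≠ p.2}).toReal

/-- The infimum of the 0-1 risk over all measurable functions. -/
def bayes01 {d : ℕ} (P : Measure ((Fin d → ℝ) × ℝ)) : ℝ :=
  ⨅ g : {g : (Fin d → ℝ) → ℝ // Measurable g}, risk01 P g.1

/-- The excess 0-1 risk. -/
def excess01 {d : ℕ} (P : Measure ((Fin d → ℝ) × ℝ)) (f : (Fin d → ℝ) → ℝ) : ℝ :=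
  risk01 P f - bayes01 P

/-- The `φ`-risk. -/
def riskPhi {d : ℕ} (φ : ℝ → ℝ) (P : Measure ((Fin d → ℝ) × ℝ)) (f : (Fin d → ℝ) → ℝ) : ℝ :=
  ∫ p, φ (p.2 * f p.1) ∂P

/-- The infimum of the `φ`-risk over all measurable functions. -/
def bayesPhi {d : ℕ} (φ : ℝ → ℝ) (P : Measure ((Fin d → ℝ) × ℝ)) : ℝ :=
  ⨅ g : {g : (Fin d → ℝ) → ℝ // Measurable g}, riskPhi φ P g.1

/-- The excess `φ`-risk. -/
def excessPhi {d : ℕ} (φ : ℝ → ℝ) (P : Measure ((Fin d → ℝ) × ℝ)) (f : (Fin d → ℝ) → ℝ) : ℝ :=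
  riskPhi φ P f - bayesPhi φ P

/-- A Borel probability measure on `[0,1]^d × {-1,1}`, presented by its input marginal `Q`
(a Borel probability measure concentrated on the cube) and its conditional class
probability function `η` (measurable, `[0,1]`-valued);  the measure itself is
`jointMeasure η Q`. -/
structure DataDist (d : ℕ) where
  η : (Fin d → ℝ) → ℝ
  Q : Measure (Fin d → ℝ)
  η_meas : Measurable η
  η_mem : ∀ x, η x ∈ Set.Icc (0 : ℝ) 1
  Q_prob : IsProbabilityMeasure Q
  Q_cube : Q (cube d) = 1

/-- The measure on `[0,1]^d × {-1,1}` associated with a `DataDist`. -/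
def DataDist.P {d : ℕ} (D : DataDist d) : Measure ((Fin d → ℝ) × ℝ) := jointMeasure D.η D.Q

/-- `x ^ s` for `s ∈ [0,∞]`, with the conventions `x ^ ∞ = 0` for `x < 1` and `1 ^ ∞ = 1`. -/
def rpowE (x : ℝ≥0∞) (s : ℝ≥0∞) : ℝ≥0∞ :=
  if s = ∞ then (if x < 1 then 0 else if x = 1 then 1 else ∞) else x ^ s.toReal

/-- The Tsybakov noise class `T^{d,s}_{α,τ}` (noise exponent `s ∈ [0,∞]`,
threshold `τ ∈ (0,∞]`). -/
def Tsybakov (d : ℕ) (s : ℝ≥0∞) (α : ℝ) (τ : ℝ≥0∞) : Set (DataDist d) :=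
  {P | ∀ t : ℝ, 0 < t → ENNReal.ofReal t ≤ τ →
    P.Q ({x | |2 * P.η x - 1| ≤ t} ∩ cube d) ≤ ENNReal.ofReal α * rpowE (ENNReal.ofReal t) s}

/-- The class `H^{d,β,r}_{q,K,dstar,dmax}`: distributions whose conditional class probability
agrees a.s. with a member of `G^CHOM`. -/
def HCHOM (d q K dstar dmax : ℕ) (β r : ℝ) : Set (DataDist d) :=
  {P | ∃ f ∈ GCHOM K dmax dstar β r q d, ∀ᵐ x ∂P.Q, P.η x = f x}

/-- `M_{Λ,d}`: Borel probability measures on `[0,1]^d` with a `[0,Λ]`-valued density with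
respect to Lebesgue measure. -/
def MLam (d : ℕ) (Λ : ℝ) : Set (Measure (Fin d → ℝ)) :=
  {Q | ∃ g : (Fin d → ℝ) → ℝ, Measurable g ∧ (∀ x, g x ∈ Set.Icc 0 Λ) ∧
    Q = (volume.restrict (cube d)).withDensity fun x => ENNReal.ofReal (g x)}

/-- The class `H^{d,β,r,Λ}_{q,K,dstar}`: joint laws `P_{η,Q}` with `η ∈ G^CH` (valued in
`[0,1]`) and `Q ∈ M_{Λ,d}`. -/
def HCHL (d q K dstar : ℕ) (β r Λ : ℝ) : Set (DataDist d) :=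
  {P | (∃ f ∈ GCH K dstar β r q d, (∀ x ∈ cube d, f x ∈ Set.Icc (0 : ℝ) 1) ∧
      ∀ᵐ x ∂P.Q, P.η x = f x) ∧ P.Q ∈ MLam d Λ}

/-- The class `H^{d,β,r}_{q,K,dstar}`: joint laws `P_{η,Q}` with `η ∈ G^CH` (valued in
`[0,1]`) and `Q` an arbitrary Borel probability measure on the cube. -/
def HCH (d q K dstar : ℕ) (β r : ℝ) : Set (DataDist d) :=
  {P | ∃ f ∈ GCH K dstar β r q d, (∀ x ∈ cube d, f x ∈ Set.Icc (0 : ℝ) 1) ∧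
    ∀ᵐ x ∂P.Q, P.η x = f x}

/-! ## Samples and estimators -/

/-- The law of an i.i.d. sample of size `n` from `μ`. -/
def iid {α : Type*} [MeasurableSpace α] (μ : Measure α) : (n : ℕ) → Measure (Fin n → α)
  | 0 => Measure.dirac fun i => i.elim0
  | n + 1 => (iid μ n).bind fun p => μ.map fun a => Fin.snoc p a

/-- An estimator: a rule assigning to each sample of size `n` a function `[0,1]^d → ℝ`. -/
def Estimator (d n : ℕ) := (Fin n → (Fin d → ℝ) × ℝ) → (Fin d → ℝ) → ℝ

/-- (Joint) measurability of an estimator. -/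
def Estimator.Meas {d n : ℕ} (A : Estimator d n) : Prop :=
  Measurable fun p : (Fin n → (Fin d → ℝ) × ℝ) × (Fin d → ℝ) => A p.1 p.2

/-- The expected excess 0-1 risk `E_{P^{⊗n}}[E_P(f̂_n)]` of an estimator. -/
def expectedExcess01 {d : ℕ} (P : Measure ((Fin d → ℝ) × ℝ)) {n : ℕ} (A : Estimator d n) : ℝ :=
  ∫ ω, excess01 P (A ω) ∂iid P n

/-- The covering number `N(F, γ)` (uniform norm over `Ω`), valued in `ℝ≥0∞`. -/
def coveringNumber {X : Type*} (Ω : Set X) (F : Set (X → ℝ)) (γ : ℝ) : ℝ≥0∞ :=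
  ⨅ (A : Finset (X → ℝ))
    (_ : ↑A ⊆ F ∧ ∀ f ∈ F, ∃ g ∈ A, ∀ x ∈ Ω, |f x - g x| ≤ γ),
    (A.card : ℝ≥0∞)

/-- `f` is an empirical `φ`-risk minimizer over `F` for the sample `ω`. -/
def IsERM {d n : ℕ} (φ : ℝ → ℝ) (F : Set ((Fin d → ℝ) → ℝ))
    (ω : Fin n → (Fin d → ℝ) × ℝ) (f : (Fin d → ℝ) → ℝ) : Prop :=
  f ∈ F ∧ ∀ g ∈ F,
    (n : ℝ)⁻¹ * ∑ i, φ ((ω i).2 * f ((ω i).1)) ≤ (n : ℝ)⁻¹ * ∑ i, φ ((ω i).2 * g ((ω i).1))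

/-! ## ReLU neural networks -/

/-- A feedforward ReLU network with input dimension `d`. -/
structure ReLUNet (d : ℕ) where
  L : ℕ
  width : ℕ → ℕ
  W : (i : ℕ) → Fin (width (i + 1)) → Fin (width i) → ℝ
  v : (i : ℕ) → Fin (width i) → ℝ
  h0 : width 0 = d
  hL : width (L + 1) = 1

/-- The `i`-th intermediate layer output `W_i σ_{v_i} ⋯ W_1 σ_{v_1} W_0 x`. -/
def ReLUNet.layer {d : ℕ} (net : ReLUNet d) (x : Fin (net.width 0) → ℝ) :
    (i : ℕ) → Fin (net.width (i + 1)) → ℝ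
  | 0 => fun j => ∑ k, net.W 0 j k * x k
  | i + 1 => fun j => ∑ k, net.W (i + 1) j k * max 0 (net.layer x i k - net.v (i + 1) k)

/-- The real-valued function computed by a ReLU network. -/
def ReLUNet.eval {d : ℕ} (net : ReLUNet d) (x : Fin d → ℝ) : ℝ :=
  net.layer (fun j => x (Fin.cast net.h0 j)) net.L (Fin.cast net.hL.symm 0)

/-- The class `F^NN_d(G, N, S, B, Fb)` of ReLU networks with depth `≤ G`, widths `≤ N`,
at most `S` nonzero parameters, parameter magnitudes `≤ B`, and uniform norm on the cube
`≤ Fb`. -/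
def FNN (d : ℕ) (G N : ℝ) (S : ℝ≥0∞) (B : ℝ) (Fb : ℝ≥0∞) : Set ((Fin d → ℝ) → ℝ) :=
  {f | ∃ net : ReLUNet d,
    (∀ x, f x = net.eval x) ∧
    (net.L : ℝ) ≤ G ∧
    (∀ i ≤ net.L + 1, (net.width i : ℝ) ≤ N) ∧
    ((∑ i ∈ Finset.range (net.L + 1),
        (Nat.card {p : Fin (net.width (i + 1)) × Fin (net.width i) // net.W i p.1 p.2 ≠ 0}
          : ℝ≥0∞)) +
      ∑ i ∈ Finset.range net.L,
        (Nat.card {j : Fin (net.width (i + 1)) // net.v (i + 1) j ≠ 0} : ℝ≥0∞)) ≤ S ∧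
    (∀ i ≤ net.L, ∀ j k, |net.W i j k| ≤ B) ∧
    (∀ i, 1 ≤ i → i ≤ net.L → ∀ j, |net.v i j| ≤ B) ∧
    ∀ x ∈ cube d, ENNReal.ofReal |f x| ≤ Fb}

/-! ## Kullback–Leibler divergence -/

open Classical in
/-- The Kullback–Leibler divergence. -/
def KL {X : Type*} [MeasurableSpace X] (P Q : Measure X) : ℝ≥0∞ :=
  if P ≪ Q ∧ Integrable (fun x => Real.log (P.rnDeriv Q x).toReal) P then
    ENNReal.ofReal (∫ x, Real.log (P.rnDeriv Q x).toReal ∂P)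
  else ∞

/-- The exponent `e / (dstar/(s+1) + (1 + 1/(s+1))·e)` of the minimax rate, for noise
exponent `s ∈ [0,∞]` (equal to `1` when `s = ∞`). -/
def rateExp (dstar : ℕ) (e : ℝ) (s : ℝ≥0∞) : ℝ :=
  if s = ∞ then 1
  else e / ((dstar : ℝ) / (s.toReal + 1) + (1 + 1 / (s.toReal + 1)) * e)

/-! ## Iterated partial derivatives -/

theorem pderivList_append {m : ℕ} (l l' : List (Fin m)) (f : (Fin m → ℝ) → ℝ) :
    pderivList (l ++ l') f = pderivList l' (pderivList l f) := by
  induction l generalizing f with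
  | nil => rfl
  | cons i l ih => exact ih _

theorem contDiff_partial {m : ℕ} {f : (Fin m → ℝ) → ℝ} (hf : ContDiff ℝ (⊤ : ℕ∞) f) (i : Fin m) :
    ContDiff ℝ (⊤ : ℕ∞) fun x => fderiv ℝ f x (Pi.single i 1) :=
  (hf.fderiv_right (m := (⊤ : ℕ∞)) (by simp)).clm_apply contDiff_const

theorem contDiff_pderivList {m : ℕ} (l : List (Fin m)) {f : (Fin m → ℝ) → ℝ}
    (hf : ContDiff ℝ (⊤ : ℕ∞) f) : ContDiff ℝ (⊤ : ℕ∞) (pderivList l f) := by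
  induction l generalizing f with
  | nil => exact hf
  | cons i l ih => exact ih (contDiff_partial hf i)

theorem pderivList_const_add {m : ℕ} (a : ℝ) (l : List (Fin m)) (f : (Fin m → ℝ) → ℝ) :
    pderivList l (fun x => a + f x) =
      fun x => (if l = [] then a else 0) + pderivList l f x := by
  cases l with
  | nil => simp [pderivList]
  | cons i l => simp [pderivList, fderiv_const_add]

theorem pderivList_zero {m : ℕ} (l : List (Fin m)) :
    pderivList l (fun _ => (0 : ℝ)) = fun _ => 0 := by
  induction l with
  | nil => rfl
  | cons i l ih => simpa [pderivList] using ih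

theorem length_idxList {m : ℕ} (u : Fin m → ℕ) : (idxList u).length = mord u := by
  simp [idxList, mord, List.length_flatMap, Fin.sum_univ_def]

theorem Dm_eq_self {m : ℕ} {u : Fin m → ℕ} (hu : mord u = 0) (f : (Fin m → ℝ) → ℝ) :
    Dm u f = f := by
  have : idxList u = [] := List.length_eq_zero_iff.1 (by rw [length_idxList, hu])
  rw [Dm, this, pderivList]

/-! ## Membership in Hölder balls -/

theorem norm_sub_le_e2 {m : ℕ} (x z : Fin m → ℝ) : ‖x - z‖ ≤ e2 x z := by
  refine (pi_norm_le_iff_of_nonneg (Real.sqrt_nonneg _)).2 fun i => ?_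
  rw [Real.norm_eq_abs, Pi.sub_apply]
  exact Real.abs_le_sqrt
    (Finset.single_le_sum (f := fun i => (x i - z i) ^ 2) (fun i _ => sq_nonneg _)
      (Finset.mem_univ i))

theorem e2_pos {m : ℕ} {x z : Fin m → ℝ} (h : x ≠ z) : 0 < e2 x z :=
  (norm_pos_iff.2 (sub_ne_zero.2 h)).trans_le (norm_sub_le_e2 x z)

theorem convex_cubeo (m : ℕ) : Convex ℝ (cubeo m) := convex_pi fun _ _ => convex_Ioo 0 1

/-- A bound on all first partial derivatives gives a Lipschitz bound on the open cube. -/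
theorem abs_sub_le_of_partial_le {m : ℕ} {f : (Fin m → ℝ) → ℝ} (hf : Differentiable ℝ f) {C : ℝ}
    (hC : ∀ i, ∀ x ∈ cubeo m, |fderiv ℝ f x (Pi.single i 1)| ≤ C) {x z : Fin m → ℝ}
    (hx : x ∈ cubeo m) (hz : z ∈ cubeo m) : |f x - f z| ≤ m * C * ‖x - z‖ := by
  have key := (convex_cubeo m).norm_image_sub_le_of_norm_fderiv_le (𝕜 := ℝ) (f := f) (C := m * C)
    (fun x _ => hf x) (fun y hy => ?_) hz hx
  · simpa using key
  · rcases Nat.eq_zero_or_pos m with rfl | hm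
    · have : fderiv ℝ f y = 0 := by
        ext v
        rw [Subsingleton.elim v 0, map_zero, map_zero]
      simp [this]
    have hC0 : 0 ≤ C := (abs_nonneg _).trans (hC ⟨0, hm⟩ y hy)
    refine ContinuousLinearMap.opNorm_le_bound _ (by positivity) fun v => ?_
    have hv : v = ∑ i, v i • (Pi.single i 1 : Fin m → ℝ) := by
      ext j
      simp [Finset.sum_apply, Pi.single_apply]
    calc ‖fderiv ℝ f y v‖ = ‖∑ i, v i * fderiv ℝ f y (Pi.single i 1)‖ := by
          conv_lhs => rw [hv]
          simp only [map_sum, map_smul, smul_eq_mul]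
      _ ≤ ∑ i, ‖v i * fderiv ℝ f y (Pi.single i 1)‖ := norm_sum_le _ _
      _ ≤ ∑ _i : Fin m, ‖v‖ * C := by
          refine Finset.sum_le_sum fun i _ => ?_
          rw [norm_mul]
          exact mul_le_mul (norm_le_pi_norm v i) (hC i y hy) (norm_nonneg _) (norm_nonneg _)
      _ = m * C * ‖v‖ := by simp; ring

theorem min_one_le_rpow {t s : ℝ} (ht : 0 ≤ t) (hs0 : 0 < s) (hs1 : s ≤ 1) : min 1 t ≤ t ^ s := by
  rcases le_total 1 t with h | h
  · exact (min_le_left _ _).trans (Real.one_le_rpow h hs0.le)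
  · refine (min_le_right _ _).trans ?_
    simpa using Real.rpow_le_rpow_of_exponent_ge' ht h hs0.le hs1

/-- A smooth function whose partial derivatives of order `k` are at most `B * M ^ (k - β)`
for `k ≤ ⌈β⌉` has Hölder norm bounded by a multiple of `B`, uniformly in the scale `M ≥ 1`. -/
theorem const_add_mem_HolderBall {m : ℕ} (hm : 0 < m) {β r a B M : ℝ} (ha : 0 ≤ a)
    (hB : 0 ≤ B) (hM : 1 ≤ M) (hr : a + (1 + 2 * m) * B ≤ r) {F : (Fin m → ℝ) → ℝ}
    (hF : ContDiff ℝ (⊤ : ℕ∞) F)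
    (hbd : ∀ l : List (Fin m), l.length ≤ ⌈β⌉₊ → ∀ x ∈ cubeo m,
      |pderivList l F x| ≤ B * M ^ ((l.length : ℝ) - β)) :
    (fun x => a + F x) ∈ HolderBall m β r := by
  have hM0 : 0 < M := by linarith
  have hm1 : (1 : ℝ) ≤ m := by exact_mod_cast hm
  have hlen : ∀ u : Fin m → ℕ, (mord u : ℝ) < β → (idxList u).length + 1 ≤ ⌈β⌉₊ := fun u hu => by
    rw [length_idxList]
    exact Nat.lt_ceil.2 hu
  have hdiff : ∀ (u : Fin m → ℕ) (x z), Dm u (fun x => a + F x) x - Dm u (fun x => a + F x) z =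
      pderivList (idxList u) F x - pderivList (idxList u) F z := fun u x z => by
    simp only [Dm, pderivList_const_add]
    ring
  have hlip : ∀ u : Fin m → ℕ, (mord u : ℝ) < β → ∀ x ∈ cubeo m, ∀ z ∈ cubeo m,
      |Dm u (fun x => a + F x) x - Dm u (fun x => a + F x) z| ≤
        m * (B * M ^ ((mord u : ℝ) + 1 - β)) * ‖x - z‖ := by
    intro u hu x hx z hz
    rw [hdiff]
    refine abs_sub_le_of_partial_le ((contDiff_pderivList _ hF).differentiable (by simp)) ?_ hx hz
    intro i y hy
    have := hbd (idxList u ++ [i]) (by simpa using hlen u hu) y hy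
    rw [pderivList_append] at this
    simpa [pderivList, length_idxList] using this
  refine ⟨(contDiff_const.add hF).continuous.continuousOn, ?_, ?_, ?_⟩
  · exact ((contDiff_const.add hF).of_le (by exact_mod_cast le_top)).contDiffOn
  · intro u hu
    refine LipschitzOnWith.uniformContinuousOn
      (K := (m * (B * M ^ ((mord u : ℝ) + 1 - β))).toNNReal) ?_
    refine LipschitzOnWith.of_dist_le_mul fun x hx z hz => ?_
    rw [Real.coe_toNNReal _ (by positivity), Real.dist_eq, dist_eq_norm]
    exact hlip u hu x hx z hz
  · have h1 : (⨆ (u : Fin m → ℕ) (_ : (mord u : ℝ) < β) (x ∈ cubeo m),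
        ENNReal.ofReal |Dm u (fun x => a + F x) x|) ≤ ENNReal.ofReal (a + B) := by
      refine iSup_le fun u => iSup_le fun hu => iSup_le fun x => iSup_le fun hx =>
        ENNReal.ofReal_le_ofReal ?_
      have h2 := hbd (idxList u) (by linarith [hlen u hu]) x hx
      have h3 : M ^ (((idxList u).length : ℝ) - β) ≤ 1 :=
        Real.rpow_le_one_of_one_le_of_nonpos hM (by rw [length_idxList]; linarith)
      simp only [Dm, pderivList_const_add]
      refine (abs_add_le _ _).trans (add_le_add ?_ (h2.trans (mul_le_of_le_one_right hB h3)))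
      split_ifs <;> simp [ha, abs_of_nonneg]
    have h2 : (⨆ (u : Fin m → ℕ) (_ : (⌈β⌉ : ℝ) - 1 ≤ (mord u : ℝ) ∧ (mord u : ℝ) < β)
        (x ∈ cubeo m) (z ∈ cubeo m) (_ : x ≠ z),
        ENNReal.ofReal |Dm u (fun x => a + F x) x - Dm u (fun x => a + F x) z| /
          ENNReal.ofReal (e2 x z) ^ (β + 1 - (⌈β⌉ : ℝ))) ≤ ENNReal.ofReal (2 * m * B) := by
      refine iSup_le fun u => iSup_le fun hu => iSup_le fun x => iSup_le fun hx => iSup_le fun z =>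
        iSup_le fun hz => iSup_le fun hxz => ?_
      have hpos := e2_pos hxz
      rw [ENNReal.ofReal_rpow_of_pos hpos, ← ENNReal.ofReal_div_of_pos (by positivity)]
      refine ENNReal.ofReal_le_ofReal ((div_le_iff₀ (by positivity)).2 ?_)
      have hord : (mord u : ℝ) = (⌈β⌉ : ℝ) - 1 := by
        refine le_antisymm ?_ hu.1
        have : (mord u : ℤ) < ⌈β⌉ := Int.lt_ceil.2 (by exact_mod_cast hu.2)
        have : (mord u : ℤ) ≤ ⌈β⌉ - 1 := by omega
        exact_mod_cast this
      set s : ℝ := β + 1 - (⌈β⌉ : ℝ) with hs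
      have hs0 : 0 < s := by linarith [hu.2]
      have hs1 : s ≤ 1 := by linarith [Int.le_ceil β]
      set D := |Dm u (fun x => a + F x) x - Dm u (fun x => a + F x) z|
      have hD1 : D ≤ 2 * m * B * M ^ (-s) := by
        have hx' := hbd (idxList u) (by linarith [hlen u hu.2]) x hx
        have hz' := hbd (idxList u) (by linarith [hlen u hu.2]) z hz
        rw [length_idxList, hord, show (⌈β⌉ : ℝ) - 1 - β = -s by ring] at hx' hz'
        have hD : D ≤ 2 * (B * M ^ (-s)) := by
          simp only [D, hdiff]
          exact (abs_sub _ _).trans (by linarith)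
        have : 0 ≤ B * M ^ (-s) := by positivity
        nlinarith
      have hD2 : D ≤ 2 * m * B * M ^ (-s) * (M * e2 x z) := by
        have h := hlip u hu.2 x hx z hz
        rw [hord, show (⌈β⌉ : ℝ) - 1 + 1 - β = -s + 1 by ring, Real.rpow_add hM0,
          Real.rpow_one] at h
        have h' := norm_sub_le_e2 x z
        have : 0 ≤ m * (B * (M ^ (-s) * M)) := by positivity
        calc D ≤ m * (B * (M ^ (-s) * M)) * ‖x - z‖ := h
          _ ≤ m * (B * (M ^ (-s) * M)) * e2 x z := by gcongr
          _ ≤ 2 * (m * (B * (M ^ (-s) * M)) * e2 x z) := by nlinarith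
          _ = _ := by ring
      calc D ≤ 2 * m * B * M ^ (-s) * min 1 (M * e2 x z) := by
            rcases min_choice 1 (M * e2 x z) with h | h <;> rw [h]
            · simpa using hD1
            · exact hD2
        _ ≤ 2 * m * B * M ^ (-s) * (M * e2 x z) ^ s := by
            gcongr
            exact min_one_le_rpow (by positivity) hs0 hs1
        _ = 2 * m * B * (M ^ (-s) * M ^ s) * e2 x z ^ s := by
            rw [Real.mul_rpow hM0.le hpos.le]; ring
        _ = 2 * m * B * e2 x z ^ s := by
            rw [← Real.rpow_add hM0]; simp
    calc holderNormOn m β (cubeo m) (fun x => a + F x)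
        ≤ ENNReal.ofReal (a + B) + ENNReal.ofReal (2 * m * B) := add_le_add h1 h2
      _ = ENNReal.ofReal (a + B + 2 * m * B) :=
          (ENNReal.ofReal_add (by positivity) (by positivity)).symm
      _ ≤ ENNReal.ofReal r := ENNReal.ofReal_le_ofReal (by linarith)

theorem abs_rpow_sub_rpow_le {a b s : ℝ} (ha : 0 ≤ a) (hb : 0 ≤ b) (hs0 : 0 < s) (hs1 : s ≤ 1) :
    |a ^ s - b ^ s| ≤ |a - b| ^ s := by
  wlog h : b ≤ a generalizing a b with H
  · rw [abs_sub_comm, abs_sub_comm a]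
    exact H hb ha (le_of_not_ge h)
  · have hsub : 0 ≤ a - b := sub_nonneg.2 h
    rw [abs_of_nonneg hsub,
      abs_of_nonneg (sub_nonneg.2 (Real.rpow_le_rpow hb h hs0.le))]
    have h' := Real.rpow_add_le_add_rpow hsub hb hs0.le hs1
    rw [sub_add_cancel] at h'
    linarith

/-- For `β ≤ 1`, the power function of a single coordinate is `β`-Hölder. -/
theorem rpow_mem_HolderBall {m : ℕ} (i : Fin m) {β r a c : ℝ} (hβ0 : 0 < β) (hβ1 : β ≤ 1)
    (ha : 0 ≤ a) (hc : 0 ≤ c) (hr : a + 2 * c ≤ r) :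
    (fun x : Fin m → ℝ => a + c * x i ^ β) ∈ HolderBall m β r := by
  have hceil : ⌈β⌉ = 1 := Int.ceil_eq_iff.2 (by constructor <;> simp [hβ0, hβ1])
  have hord : ∀ u : Fin m → ℕ, (mord u : ℝ) < β → mord u = 0 := fun u hu => by
    have : (mord u : ℝ) < 1 := hu.trans_le hβ1
    exact Nat.lt_one_iff.1 (by exact_mod_cast this)
  have hcont : Continuous fun x : Fin m → ℝ => a + c * x i ^ β :=
    continuous_const.add (continuous_const.mul
      ((continuous_apply i).rpow_const fun _ => Or.inr hβ0.le))
  have hhol : ∀ x ∈ cube m, ∀ z ∈ cube m,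
      |(a + c * x i ^ β) - (a + c * z i ^ β)| ≤ c * |x i - z i| ^ β := fun x hx z hz => by
    rw [add_sub_add_left_eq_sub, ← mul_sub, abs_mul, abs_of_nonneg hc]
    exact mul_le_mul_of_nonneg_left
      (abs_rpow_sub_rpow_le (hx i trivial).1 (hz i trivial).1 hβ0 hβ1) hc
  have hsub : cubeo m ⊆ cube m := Set.pi_mono fun _ _ => Ioo_subset_Icc_self
  refine ⟨hcont.continuousOn, ?_, ?_, ?_⟩
  · have : smoothOrder β = 0 := Nat.ceil_eq_zero.2 (by linarith)
    rw [this]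
    exact contDiffOn_zero.2 hcont.continuousOn
  · intro u hu
    rw [Dm_eq_self (hord u hu)]
    have hcompact : IsCompact (cube m) := isCompact_univ_pi fun _ => isCompact_Icc
    exact (hcompact.uniformContinuousOn_of_continuous hcont.continuousOn).mono hsub
  · have h1 : (⨆ (u : Fin m → ℕ) (_ : (mord u : ℝ) < β) (x ∈ cubeo m),
        ENNReal.ofReal |Dm u (fun x => a + c * x i ^ β) x|) ≤ ENNReal.ofReal (a + c) := by
      refine iSup_le fun u => iSup_le fun hu => iSup_le fun x => iSup_le fun hx =>
        ENNReal.ofReal_le_ofReal ?_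
      have hx' := hsub hx i trivial
      have h0 : 0 ≤ x i ^ β := Real.rpow_nonneg hx'.1 _
      have h1 : x i ^ β ≤ 1 := Real.rpow_le_one hx'.1 hx'.2 hβ0.le
      rw [Dm_eq_self (hord u hu), abs_of_nonneg (by positivity)]
      nlinarith
    have h2 : (⨆ (u : Fin m → ℕ) (_ : (⌈β⌉ : ℝ) - 1 ≤ (mord u : ℝ) ∧ (mord u : ℝ) < β)
        (x ∈ cubeo m) (z ∈ cubeo m) (_ : x ≠ z),
        ENNReal.ofReal |Dm u (fun x => a + c * x i ^ β) x - Dm u (fun x => a + c * x i ^ β) z| /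
          ENNReal.ofReal (e2 x z) ^ (β + 1 - (⌈β⌉ : ℝ))) ≤ ENNReal.ofReal c := by
      refine iSup_le fun u => iSup_le fun hu => iSup_le fun x => iSup_le fun hx => iSup_le fun z =>
        iSup_le fun hz => iSup_le fun hxz => ?_
      have hpos := e2_pos hxz
      rw [hceil, Int.cast_one, add_sub_cancel_right, Dm_eq_self (hord u hu.2),
        ENNReal.ofReal_rpow_of_pos hpos, ← ENNReal.ofReal_div_of_pos (by positivity)]
      refine ENNReal.ofReal_le_ofReal ((div_le_iff₀ (by positivity)).2 ?_)
      refine (hhol x (hsub hx) z (hsub hz)).trans ?_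
      gcongr
      exact (norm_le_pi_norm (x - z) i).trans (norm_sub_le_e2 x z)
    calc holderNormOn m β (cubeo m) (fun x => a + c * x i ^ β)
        ≤ ENNReal.ofReal (a + c) + ENNReal.ofReal c := add_le_add h1 h2
      _ = ENNReal.ofReal (a + c + c) := (ENNReal.ofReal_add (by positivity) hc).symm
      _ ≤ ENNReal.ofReal r := ENNReal.ofReal_le_ofReal (by linarith)

theorem abs_pderivList_linear_le {m : ℕ} (i : Fin m) {c : ℝ} (hc : 0 ≤ c) (l : List (Fin m)) :
    ∀ x ∈ cubeo m, |pderivList l (fun x => c * x i) x| ≤ c := by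
  have hder : ∀ (j : Fin m) (x : Fin m → ℝ), fderiv ℝ (fun x : Fin m → ℝ => c * x i) x
      (Pi.single j 1) = c * (Pi.single j 1 : Fin m → ℝ) i := fun j x => by
    have h : HasFDerivAt (fun x : Fin m → ℝ => c * x i)
        (c • ContinuousLinearMap.proj (R := ℝ) (φ := fun _ : Fin m => ℝ) i) x :=
      (ContinuousLinearMap.hasFDerivAt
        (ContinuousLinearMap.proj (R := ℝ) (φ := fun _ : Fin m => ℝ) i)).const_mul c
    rw [h.fderiv]
    simp
  intro x hx
  have hxi := hx i trivial
  match l with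
  | [] =>
    simp only [pderivList]
    rw [abs_of_nonneg (mul_nonneg hc hxi.1.le)]
    exact mul_le_of_le_one_right hc hxi.2.le
  | [j] =>
    simp only [pderivList, hder, Pi.single_apply]
    split_ifs <;> simp [abs_of_nonneg, hc]
  | j :: k :: l =>
    simpa [pderivList, hder, pderivList_zero] using hc

/-- The function `a + c * (x i) ^ (min 1 β)` of a single coordinate is `β`-Hölder. -/
theorem rpow_min_mem_HolderBall {m : ℕ} (i : Fin m) {β r a c : ℝ} (hβ : 0 < β)
    (ha : 0 ≤ a) (hc : 0 ≤ c) (hr : a + (1 + 2 * m) * c ≤ r) :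
    (fun x : Fin m → ℝ => a + c * x i ^ min 1 β) ∈ HolderBall m β r := by
  have hm : (1 : ℝ) ≤ m := by exact_mod_cast i.pos
  rcases le_total β 1 with h | h
  · rw [min_eq_right h]
    exact rpow_mem_HolderBall i hβ h ha hc (by nlinarith)
  · simp only [min_eq_left h, Real.rpow_one]
    refine const_add_mem_HolderBall i.pos (M := 1) ha hc le_rfl hr (by fun_prop) fun l _ x hx => ?_
    simpa using abs_pderivList_linear_le i hc l x hx

/-! ## Sums of bumps on a grid of cells -/

/-- The rescaled position of `x` relative to the grid cell with index `k`. -/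
def cellCoord {m N : ℕ} (k : Fin m → Fin N) (x : Fin m → ℝ) : Fin m → ℝ :=
  fun j => N * x j - (k j : ℕ)

/-- The closed box of radius `ρ` around the centre of the unit cube. -/
def centerBox (m : ℕ) (ρ : ℝ) : Set (Fin m → ℝ) := Metric.closedBall (fun _ => 1 / 2) ρ

/-- The weighted sum of the copies of `φ`, one on each grid cell. -/
def bumpSum {m N : ℕ} (φ : (Fin m → ℝ) → ℝ) (s : (Fin m → Fin N) → ℝ) (x : Fin m → ℝ) : ℝ :=
  ∑ k, s k * φ (cellCoord k x)

theorem mem_centerBox {m : ℕ} {ρ : ℝ} (hρ : 0 ≤ ρ) {x : Fin m → ℝ} :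
    x ∈ centerBox m ρ ↔ ∀ j, |x j - 1 / 2| ≤ ρ := by
  simp [centerBox, dist_pi_le_iff hρ, Real.dist_eq]

theorem cell_unique {m N : ℕ} {k k' : Fin m → Fin N} {x : Fin m → ℝ} {ρ : ℝ} (hρ0 : 0 ≤ ρ)
    (hρ : ρ < 1 / 2) (hk : cellCoord k x ∈ centerBox m ρ) (hk' : cellCoord k' x ∈ centerBox m ρ) :
    k = k' := by
  rw [mem_centerBox hρ0] at hk hk'
  funext j
  have h := abs_le.1 (hk j)
  have h' := abs_le.1 (hk' j)
  simp only [cellCoord] at h h'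
  have h1 : ((k j : ℕ) : ℝ) < (k' j : ℕ) + 1 := by linarith
  have h2 : ((k' j : ℕ) : ℝ) < (k j : ℕ) + 1 := by linarith
  have h1' : (k j : ℕ) < k' j + 1 := by exact_mod_cast h1
  have h2' : (k' j : ℕ) < k j + 1 := by exact_mod_cast h2
  exact Fin.ext (by omega)

theorem bumpSum_eq {m N : ℕ} {φ : (Fin m → ℝ) → ℝ} {ρ : ℝ} (hρ0 : 0 ≤ ρ) (hρ : ρ < 1 / 2)
    (hφ : ∀ x ∉ centerBox m ρ, φ x = 0) (s : (Fin m → Fin N) → ℝ) {k : Fin m → Fin N}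
    {x : Fin m → ℝ} (hk : cellCoord k x ∈ centerBox m ρ) :
    bumpSum φ s x = s k * φ (cellCoord k x) := by
  refine Finset.sum_eq_single k (fun k' _ hne => ?_) (fun h => absurd (Finset.mem_univ k) h)
  rw [hφ _ fun h => hne (cell_unique hρ0 hρ h hk), mul_zero]

theorem bumpSum_eq_zero {m N : ℕ} {φ : (Fin m → ℝ) → ℝ} {ρ : ℝ}
    (hφ : ∀ x ∉ centerBox m ρ, φ x = 0) (s : (Fin m → Fin N) → ℝ)
    {x : Fin m → ℝ} (hx : ∀ k : Fin m → Fin N, cellCoord k x ∉ centerBox m ρ) :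
    bumpSum φ s x = 0 :=
  Finset.sum_eq_zero fun k _ => by rw [hφ _ (hx k), mul_zero]

theorem abs_bumpSum_le {m N : ℕ} {φ : (Fin m → ℝ) → ℝ} {ρ : ℝ} (hρ0 : 0 ≤ ρ) (hρ : ρ < 1 / 2)
    (hφ : ∀ x ∉ centerBox m ρ, φ x = 0) {s : (Fin m → Fin N) → ℝ} {δ C : ℝ} (hδ : 0 ≤ δ)
    (hs : ∀ k, |s k| ≤ δ) (hC : ∀ x, |φ x| ≤ C) (x : Fin m → ℝ) :
    |bumpSum φ s x| ≤ δ * C := by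
  by_cases h : ∃ k : Fin m → Fin N, cellCoord k x ∈ centerBox m ρ
  · obtain ⟨k, hk⟩ := h
    rw [bumpSum_eq hρ0 hρ hφ s hk, abs_mul]
    exact mul_le_mul (hs k) (hC _) (abs_nonneg _) hδ
  · rw [bumpSum_eq_zero hφ s (not_exists.1 h), abs_zero]
    exact mul_nonneg hδ ((abs_nonneg _).trans (hC x))

theorem contDiff_cellCoord {m N : ℕ} (k : Fin m → Fin N) :
    ContDiff ℝ (⊤ : ℕ∞) (cellCoord k) := by
  unfold cellCoord
  fun_prop

theorem contDiff_bumpSum {m N : ℕ} {φ : (Fin m → ℝ) → ℝ} (hφ : ContDiff ℝ (⊤ : ℕ∞) φ)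
    (s : (Fin m → Fin N) → ℝ) : ContDiff ℝ (⊤ : ℕ∞) (bumpSum φ s) :=
  ContDiff.sum fun k _ => contDiff_const.mul (hφ.comp (contDiff_cellCoord k))

theorem partial_bumpSum {m N : ℕ} {φ : (Fin m → ℝ) → ℝ} (hφ : Differentiable ℝ φ)
    (s : (Fin m → Fin N) → ℝ) (i : Fin m) (x : Fin m → ℝ) :
    fderiv ℝ (bumpSum φ s) x (Pi.single i 1) =
      bumpSum (fun y => fderiv ℝ φ y (Pi.single i 1)) (fun k => N * s k) x := by
  have hcell : ∀ k : Fin m → Fin N,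
      HasFDerivAt (cellCoord k) ((N : ℝ) • ContinuousLinearMap.id ℝ (Fin m → ℝ)) x := fun k => by
    have h : cellCoord k = fun x : Fin m → ℝ => (N : ℝ) • x - fun j => ((k j : ℕ) : ℝ) := rfl
    rw [h]
    exact ((hasFDerivAt_id x).const_smul (N : ℝ)).sub_const _
  have hsum : HasFDerivAt (bumpSum φ s) (∑ k : Fin m → Fin N,
      s k • (fderiv ℝ φ (cellCoord k x)).comp ((N : ℝ) • ContinuousLinearMap.id ℝ _)) x :=
    HasFDerivAt.fun_sum fun k _ => (((hφ _).hasFDerivAt).comp x (hcell k)).const_mul (s k)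
  rw [hsum.fderiv, bumpSum, sum_apply]
  refine Finset.sum_congr rfl fun k _ => ?_
  simp
  ring

theorem pderivList_bumpSum {m N : ℕ} (l : List (Fin m)) {φ : (Fin m → ℝ) → ℝ}
    (hφ : ContDiff ℝ (⊤ : ℕ∞) φ) (s : (Fin m → Fin N) → ℝ) :
    pderivList l (bumpSum φ s) =
      bumpSum (pderivList l φ) (fun k => (N : ℝ) ^ l.length * s k) := by
  induction l generalizing φ s with
  | nil => simp [pderivList]
  | cons i l ih =>
    simp only [pderivList]
    rw [funext (partial_bumpSum (hφ.differentiable (by simp)) s i), ih (contDiff_partial hφ i)]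
    simp only [List.length_cons, pow_succ, mul_assoc]

theorem pderivList_eq_zero {m : ℕ} (l : List (Fin m)) {φ : (Fin m → ℝ) → ℝ} {S : Set (Fin m → ℝ)}
    (hφ : tsupport φ ⊆ S) : ∀ x ∉ S, pderivList l φ x = 0 := by
  induction l generalizing φ with
  | nil => exact fun x hx => image_eq_zero_of_notMem_tsupport fun h => hx (hφ h)
  | cons i l ih => exact ih ((tsupport_fderiv_apply_subset ℝ _).trans hφ)

theorem exists_bound_pderivList {m : ℕ} (L : ℕ) {φ : (Fin m → ℝ) → ℝ}
    (hφ : ContDiff ℝ (⊤ : ℕ∞) φ) (hc : HasCompactSupport φ) :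
    ∃ C : ℝ, ∀ l : List (Fin m), l.length ≤ L → ∀ x, |pderivList l φ x| ≤ C := by
  induction L generalizing φ with
  | zero =>
    obtain ⟨C, hC⟩ := hc.exists_bound_of_continuous hφ.continuous
    refine ⟨C, fun l hl x => ?_⟩
    rw [List.length_eq_zero_iff.1 (Nat.le_zero.1 hl)]
    exact hC x
  | succ L ih =>
    obtain ⟨C, hC⟩ := hc.exists_bound_of_continuous hφ.continuous
    choose B hB using fun i : Fin m => ih (contDiff_partial hφ i) (hc.fderiv_apply (𝕜 := ℝ) _)
    refine ⟨|C| + ∑ i, |B i|, fun l hl x => ?_⟩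
    cases l with
    | nil =>
      exact ((hC x).trans (le_abs_self C)).trans
        (le_add_of_nonneg_right (Finset.sum_nonneg fun i _ => abs_nonneg _))
    | cons i l =>
      refine (hB i l (by simpa using hl) x).trans ((le_abs_self _).trans ?_)
      exact (Finset.single_le_sum (f := fun i => |B i|) (fun i _ => abs_nonneg _)
        (Finset.mem_univ i)).trans (le_add_of_nonneg_left (abs_nonneg C))

/-- A smooth bump on the unit cube, equal to `1` on the box of radius `1/6` around the centre and
vanishing outside of the box of radius `1/3`. -/
def cellBump (m : ℕ) : ContDiffBump (fun _ : Fin m => (1 / 2 : ℝ)) where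
  rIn := 1 / 6
  rOut := 1 / 3
  rIn_pos := by norm_num
  rIn_lt_rOut := by norm_num

theorem cellBump_eq_one {m : ℕ} {x : Fin m → ℝ} (hx : x ∈ centerBox m (1 / 6)) :
    cellBump m x = 1 := (cellBump m).one_of_mem_closedBall hx

theorem cellBump_eq_zero {m : ℕ} : ∀ x ∉ centerBox m (1 / 3), cellBump m x = 0 := fun _ hx =>
  (cellBump m).zero_of_le_dist (not_le.1 hx).le

/-- Sums of grid bumps of height `b * N ^ (-β)` lie in a fixed Hölder ball. -/
theorem exists_bumpSum_mem_HolderBall {m : ℕ} (hm : 0 < m) (β : ℝ) {B : ℝ} (hB : 0 < B) :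
    ∃ b : ℝ, 0 < b ∧ b ≤ 1 / 4 ∧ ∀ (r a : ℝ), 0 ≤ a → a + (1 + 2 * m) * B ≤ r →
      ∀ N : ℕ, 0 < N → ∀ s : (Fin m → Fin N) → ℝ, (∀ k, |s k| ≤ b * (N : ℝ) ^ (-β)) →
        (fun x => a + bumpSum (cellBump m) s x) ∈ HolderBall m β r := by
  obtain ⟨C, hC⟩ := exists_bound_pderivList ⌈β⌉₊ (cellBump m).contDiff
    (cellBump m).hasCompactSupport
  have hC1 : 0 < |C| + 1 := by positivity
  refine ⟨min (1 / 4) (B / (|C| + 1)), by positivity, min_le_left _ _, ?_⟩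
  intro r a ha hr N hN s hs
  have hN1 : (1 : ℝ) ≤ N := by exact_mod_cast hN
  have hN0 : (0 : ℝ) < N := by positivity
  refine const_add_mem_HolderBall hm ha hB.le hN1 hr
    (contDiff_bumpSum (cellBump m).contDiff s) fun l hl x _ => ?_
  rw [pderivList_bumpSum l (cellBump m).contDiff]
  have hsup : tsupport (cellBump m) ⊆ centerBox m (1 / 3) := (cellBump m).tsupport_eq.subset
  refine (abs_bumpSum_le (ρ := 1 / 3) (by norm_num) (by norm_num) (pderivList_eq_zero l hsup)
    (δ := (N : ℝ) ^ l.length * (B / (|C| + 1) * (N : ℝ) ^ (-β))) (by positivity) (fun k => ?_)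
    (C := |C| + 1) (fun y => (hC l hl y).trans (by linarith [le_abs_self C])) x).trans ?_
  · rw [abs_mul, abs_of_nonneg (by positivity : (0 : ℝ) ≤ (N : ℝ) ^ l.length)]
    gcongr
    exact (hs k).trans (by gcongr; exact min_le_right _ _)
  · rw [sub_eq_add_neg, Real.rpow_add hN0, Real.rpow_natCast]
    refine le_of_eq ?_
    field_simp

/-! ## Iterated power maps and compositional classes -/

/-- The map `t ↦ c * t ^ γ`. -/
def powMap (c γ t : ℝ) : ℝ := c * t ^ γ

theorem powMap_iterate_mem_Icc {c γ B : ℝ} (hc : 0 ≤ c) (hγ : 0 ≤ γ) (hcB : c ≤ B) (hB : B ≤ 1)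
    (q : ℕ) {t : ℝ} (ht : t ∈ Icc 0 B) : (powMap c γ)^[q] t ∈ Icc 0 B := by
  induction q generalizing t with
  | zero => exact ht
  | succ q ih =>
    refine ih ⟨mul_nonneg hc (Real.rpow_nonneg ht.1 _), ?_⟩
    exact (mul_le_of_le_one_right hc (Real.rpow_le_one ht.1 (ht.2.trans hB) hγ)).trans hcB

theorem powMap_iterate_pos {c γ : ℝ} (hc : 0 < c) (q : ℕ) {t : ℝ} (ht : 0 < t) :
    0 < (powMap c γ)^[q] t := by
  induction q generalizing t with
  | zero => exact ht
  | succ q ih => exact ih (mul_pos hc (Real.rpow_pos_of_pos ht _))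

theorem powMap_iterate_zero (c : ℝ) {γ : ℝ} (hγ : γ ≠ 0) (q : ℕ) : (powMap c γ)^[q] 0 = 0 := by
  induction q with
  | zero => rfl
  | succ q ih => rwa [Function.iterate_succ_apply, powMap, Real.zero_rpow hγ, mul_zero]

theorem powMap_iterate_mono {c γ : ℝ} (hc : 0 ≤ c) (hγ : 0 ≤ γ) (q : ℕ) {s t : ℝ} (hs : 0 ≤ s)
    (hst : s ≤ t) : (powMap c γ)^[q] s ≤ (powMap c γ)^[q] t := by
  induction q generalizing s t with
  | zero => exact hst
  | succ q ih =>
    exact ih (mul_nonneg hc (Real.rpow_nonneg hs _))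
      (mul_le_mul_of_nonneg_left (Real.rpow_le_rpow hs hst hγ) hc)

theorem powMap_iterate_mul {c γ : ℝ} (hc : 0 ≤ c) (q : ℕ) {b y : ℝ} (hb : 0 ≤ b) (hy : 0 ≤ y) :
    (powMap c γ)^[q] (b * y) = (powMap c γ)^[q] b * y ^ γ ^ q := by
  induction q generalizing b y with
  | zero => simp
  | succ q ih =>
    have h0 : 0 ≤ powMap c γ b := mul_nonneg hc (Real.rpow_nonneg hb _)
    have h : powMap c γ (b * y) = powMap c γ b * y ^ γ := by
      rw [powMap, powMap, Real.mul_rpow hb hy, mul_assoc]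
    rw [Function.iterate_succ_apply, h, ih h0 (Real.rpow_nonneg hy _), Function.iterate_succ_apply, ← Real.rpow_mul hy, pow_succ']

theorem measurable_powMap_iterate (c γ : ℝ) (q : ℕ) : Measurable (powMap c γ)^[q] :=
  Measurable.iterate (by unfold powMap; fun_prop) q

theorem const_add_powMap_mem_GH {m dstar : ℕ} (hdstar : 0 < dstar) (hm : dstar ≤ m)
    {β r a c : ℝ} (hβ : 0 < β) (ha : 0 ≤ a) (hc : 0 ≤ c) (hr : a + (1 + 2 * dstar) * c ≤ r) :
    (fun x : Fin m → ℝ => a + powMap c (min 1 β) (x (Fin.castLE hm ⟨0, hdstar⟩)))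
      ∈ GH m dstar β r :=
  ⟨Fin.castLE hm, _, Fin.strictMono_castLE hm,
    rpow_min_mem_HolderBall ⟨0, hdstar⟩ hβ ha hc hr, fun _ _ => rfl⟩

theorem const_add_powMap_iterate_mem_GCH {K dstar : ℕ} (hdstar : 0 < dstar) (hK : dstar ≤ K)
    {β r a c : ℝ} (hβ : 0 < β) (ha : 0 ≤ a) (hc : 0 ≤ c) (hc1 : c ≤ 1)
    (hr : a + (1 + 2 * dstar) * c ≤ r) (q : ℕ) :
    (fun x : Fin K → ℝ => a + (powMap c (min 1 β))^[q + 1] (x (Fin.castLE hK ⟨0, hdstar⟩)))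
      ∈ GCH K dstar β r q K := by
  induction q with
  | zero => exact ⟨_, const_add_powMap_mem_GH hdstar hK hβ ha hc hr, fun _ _ => rfl⟩
  | succ q ih =>
    refine ⟨fun x _ => powMap c (min 1 β) (x (Fin.castLE hK ⟨0, hdstar⟩)), _, fun _ => ?_, ?_, ih,
      fun _ _ => rfl⟩
    · simpa using const_add_powMap_mem_GH hdstar hK hβ le_rfl hc
        (r := r) (by linarith)
    · intro x hx j _
      exact powMap_iterate_mem_Icc hc (by positivity) hc1 le_rfl 1 (hx _ trivial)

/-- The candidate regression functions: an iterated power map applied to a sum of grid bumps,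
where the bumps present are those selected by `σ`. -/
def bumpEta {d dstar N : ℕ} (hd : dstar ≤ d) (q : ℕ) (c γ δ : ℝ) (σ : (Fin dstar → Fin N) → Bool)
    (x : Fin d → ℝ) : ℝ :=
  (1 / 2 - (powMap c γ)^[q] δ / 2) +
    (powMap c γ)^[q] (bumpSum (cellBump dstar) (fun k => if σ k then δ else 0)
      fun j => x (Fin.castLE hd j))

section bumpEta

variable {d dstar N : ℕ} (hd : dstar ≤ d) (q : ℕ) {c γ δ : ℝ}

theorem bumpSum_cellBump_mem_Icc (hδ : 0 ≤ δ) (σ : (Fin dstar → Fin N) → Bool)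
    (x : Fin dstar → ℝ) :
    bumpSum (cellBump dstar) (fun k => if σ k then δ else 0) x ∈ Icc 0 δ := by
  refine ⟨Finset.sum_nonneg fun k _ => mul_nonneg (by dsimp only; split_ifs <;> simp [hδ])
    (cellBump dstar).nonneg, (le_abs_self _).trans ?_⟩
  have := abs_bumpSum_le (ρ := 1 / 3) (by norm_num) (by norm_num) cellBump_eq_zero
    (s := fun k => if σ k then δ else 0) (C := 1) hδ
    (fun k => by split_ifs <;> simp [abs_of_nonneg, hδ])
    (fun y => by rw [abs_of_nonneg (cellBump dstar).nonneg]; exact (cellBump dstar).le_one) x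
  simpa using this

theorem measurable_bumpEta (σ : (Fin dstar → Fin N) → Bool) :
    Measurable (bumpEta hd q c γ δ σ) := by
  refine measurable_const.add ((measurable_powMap_iterate c γ q).comp
    ((contDiff_bumpSum (cellBump dstar).contDiff _).continuous.measurable.comp ?_))
  fun_prop

theorem bumpEta_mem_Icc (hc : 0 ≤ c) (hγ : 0 < γ) (hδ : 0 ≤ δ) (σ : (Fin dstar → Fin N) → Bool)
    (x : Fin d → ℝ) :
    bumpEta hd q c γ δ σ x ∈
      Icc (1 / 2 - (powMap c γ)^[q] δ / 2) (1 / 2 + (powMap c γ)^[q] δ / 2) := by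
  have h := bumpSum_cellBump_mem_Icc hδ σ fun j => x (Fin.castLE hd j)
  have h1 := powMap_iterate_mono hc hγ.le q le_rfl h.1
  have h2 := powMap_iterate_mono hc hγ.le q h.1 h.2
  rw [powMap_iterate_zero c hγ.ne' q] at h1
  constructor <;> simp only [bumpEta] <;> linarith

theorem bumpEta_of_mem (hγ : 0 < γ) (σ : (Fin dstar → Fin N) → Bool) {k : Fin dstar → Fin N}
    {x : Fin d → ℝ} (hx : cellCoord k (fun j => x (Fin.castLE hd j)) ∈ centerBox dstar (1 / 6)) :
    bumpEta hd q c γ δ σ x = if σ k then 1 / 2 + (powMap c γ)^[q] δ / 2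
      else 1 / 2 - (powMap c γ)^[q] δ / 2 := by
  have hx' : cellCoord k (fun j => x (Fin.castLE hd j)) ∈ centerBox dstar (1 / 3) :=
    Metric.closedBall_subset_closedBall (by norm_num) hx
  rw [bumpEta, bumpSum_eq (by norm_num) (by norm_num) cellBump_eq_zero _ hx', cellBump_eq_one hx]
  split_ifs
  · rw [mul_one]
    ring
  · rw [zero_mul, powMap_iterate_zero c hγ.ne', add_zero]

theorem bumpEta_congr {σ σ' : (Fin dstar → Fin N) → Bool} {k : Fin dstar → Fin N}
    (hσ : ∀ k' ≠ k, σ k' = σ' k') {x : Fin d → ℝ}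
    (hx : cellCoord k (fun j => x (Fin.castLE hd j)) ∉ centerBox dstar (1 / 3)) :
    bumpEta hd q c γ δ σ x = bumpEta hd q c γ δ σ' x := by
  have : bumpSum (cellBump dstar) (fun k => if σ k then δ else 0)
        (fun j => x (Fin.castLE hd j)) =
      bumpSum (cellBump dstar) (fun k => if σ' k then δ else 0)
        (fun j => x (Fin.castLE hd j)) := by
    refine Finset.sum_congr rfl fun k' _ => ?_
    by_cases h : k' = k
    · rw [h, cellBump_eq_zero _ hx, mul_zero, mul_zero]
    · simp only [hσ k' h]
  rw [bumpEta, bumpEta, this]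

end bumpEta

theorem exists_bumpEta_mem_GCH {dstar : ℕ} (hdstar : 0 < dstar) {β r : ℝ} (hβ : 0 < β)
    (hr : 1 / 2 < r) (q : ℕ) :
    ∃ b c : ℝ, 0 < b ∧ b ≤ 1 / 4 ∧ 0 < c ∧ c ≤ 1 / 4 ∧ ∀ (d K N : ℕ) (hd : dstar ≤ d),
      dstar * q ≤ K * q → 0 < N → ∀ σ : (Fin dstar → Fin N) → Bool,
        bumpEta hd q c (min 1 β) (b * (N : ℝ) ^ (-β)) σ ∈ GCH K dstar β r q d := by
  have hB : 0 < (r - 1 / 2) / (1 + 2 * dstar) := div_pos (by linarith) (by positivity)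
  obtain ⟨b, hb0, hb1, hb⟩ := exists_bumpSum_mem_HolderBall hdstar β hB
  refine ⟨b, min (1 / 4) ((r - 1 / 2) / (1 + 2 * dstar)), hb0, hb1, by positivity,
    min_le_left _ _, fun d K N hd hK hN σ => ?_⟩
  set c := min (1 / 4) ((r - 1 / 2) / (1 + 2 * dstar))
  set δ := b * (N : ℝ) ^ (-β)
  have hδ0 : 0 ≤ δ := by positivity
  have hδ1 : δ ≤ 1 / 4 := by
    refine (mul_le_of_le_one_right hb0.le ?_).trans hb1
    exact Real.rpow_le_one_of_one_le_of_nonpos (by exact_mod_cast hN) (by linarith)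
  have hγ : 0 < min 1 β := by positivity
  have hc0 : 0 < c := by positivity
  have hv := powMap_iterate_mem_Icc hc0.le hγ.le (min_le_left _ _) (by norm_num) q
    (⟨hδ0, hδ1⟩ : δ ∈ Icc (0 : ℝ) (1 / 4))
  have hsum : (1 + 2 * (dstar : ℝ)) * ((r - 1 / 2) / (1 + 2 * dstar)) = r - 1 / 2 := by
    field_simp
  have hball : ∀ a : ℝ, 0 ≤ a → a ≤ 1 / 2 →
      (fun x : Fin d → ℝ => a + bumpSum (cellBump dstar) (fun k => if σ k then δ else 0)
        fun j => x (Fin.castLE hd j)) ∈ GH d dstar β r := fun a ha0 ha1 =>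
    ⟨Fin.castLE hd, _, Fin.strictMono_castLE hd,
      hb r a ha0 (by linarith) N hN (fun k => if σ k then δ else 0)
        (fun k => by split_ifs <;> simp [abs_of_nonneg, hδ0, δ]), fun _ _ => rfl⟩
  cases q with
  | zero =>
    exact ⟨_, hball _ (by linarith [hv.2]) (by linarith [hv.1]), fun _ _ => rfl⟩
  | succ q =>
    have hK' : dstar ≤ K := Nat.le_of_mul_le_mul_right hK q.succ_pos
    refine ⟨fun x _ => bumpSum (cellBump dstar) (fun k => if σ k then δ else 0)
      fun j => x (Fin.castLE hd j), _, fun _ => ?_, fun x _ j _ => ?_,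
      const_add_powMap_iterate_mem_GCH hdstar hK' hβ
        (a := 1 / 2 - (powMap c (min 1 β))^[q + 1] δ / 2) (by linarith [hv.2]) hc0.le
        ((min_le_left _ _).trans (by norm_num)) ?_ q, fun _ _ => rfl⟩
    · simpa using hball 0 le_rfl (by norm_num)
    · exact Icc_subset_Icc_right (hδ1.trans (by norm_num)) (bumpSum_cellBump_mem_Icc hδ0 σ _)
    · have : (1 + 2 * (dstar : ℝ)) * c ≤ r - 1 / 2 :=
        (mul_le_mul_of_nonneg_left (min_le_right _ _) (by positivity)).trans hsum.le
      linarith [hv.1]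

/-! ## Samples and densities -/

section iid

variable {α : Type*} [MeasurableSpace α]

theorem measurable_snoc (n : ℕ) :
    Measurable fun p : (Fin n → α) × α => (Fin.snoc p.1 p.2 : Fin (n + 1) → α) := by
  refine measurable_pi_lambda _ fun i => ?_
  refine Fin.lastCases ?_ (fun j => ?_) i
  · simpa using measurable_snd
  · simp only [Fin.snoc_castSucc]
    exact (measurable_pi_apply j).comp measurable_fst

theorem lintegral_iid_succ (μ : Measure α) [SFinite μ] {n : ℕ} {F : (Fin (n + 1) → α) → ℝ≥0∞}
    (hF : Measurable F) :
    ∫⁻ ω, F ω ∂iid μ (n + 1) = ∫⁻ ω, ∫⁻ a, F (Fin.snoc ω a) ∂μ ∂iid μ n := by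
  have hsec : ∀ ω : Fin n → α, Measurable fun a : α => (Fin.snoc ω a : Fin (n + 1) → α) :=
    fun ω => (measurable_snoc n).comp measurable_prodMk_left
  have hker : Measurable fun ω : Fin n → α => μ.map fun a => (Fin.snoc ω a : Fin (n + 1) → α) := by
    refine Measure.measurable_of_measurable_coe _ fun s hs => ?_
    simp only [Measure.map_apply (hsec _) hs]
    exact measurable_measure_prodMk_left (measurable_snoc n hs)
  rw [iid, Measure.lintegral_bind hker.aemeasurable hF.aemeasurable]
  exact lintegral_congr fun ω => lintegral_map hF (hsec ω)

instance isProbabilityMeasure_iid (μ : Measure α) [IsProbabilityMeasure μ] (n : ℕ) :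
    IsProbabilityMeasure (iid μ n) := by
  induction n with
  | zero => exact Measure.dirac.isProbabilityMeasure
  | succ n ih =>
    refine ⟨?_⟩
    rw [← lintegral_one, lintegral_iid_succ μ measurable_const]
    simp

theorem lintegral_iid_prod (μ : Measure α) [SFinite μ] {g : α → ℝ≥0∞} (hg : Measurable g) (n : ℕ) :
    ∫⁻ ω, ∏ i, g (ω i) ∂iid μ n = (∫⁻ a, g a ∂μ) ^ n := by
  induction n with
  | zero => simp [iid]
  | succ n ih =>
    rw [lintegral_iid_succ μ (by fun_prop)]
    simp only [Fin.prod_univ_castSucc, Fin.snoc_castSucc, Fin.snoc_last]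
    simp only [lintegral_const_mul _ hg]
    rw [lintegral_mul_const _ (by fun_prop), ih, pow_succ]

theorem lintegral_iid_withDensity (μ : Measure α) [SFinite μ] {p : α → ℝ≥0∞} (hp : Measurable p)
    [SFinite (μ.withDensity p)] {n : ℕ} {F : (Fin n → α) → ℝ≥0∞} (hF : Measurable F) :
    ∫⁻ ω, F ω ∂iid (μ.withDensity p) n = ∫⁻ ω, (∏ i, p (ω i)) * F ω ∂iid μ n := by
  induction n with
  | zero => simp [iid, lintegral_dirac]
  | succ n ih =>
    have hF' : Measurable fun q : (Fin n → α) × α => F (Fin.snoc q.1 q.2) :=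
      hF.comp (measurable_snoc n)
    rw [lintegral_iid_succ _ hF, lintegral_iid_succ μ (by fun_prop), ih hF'.lintegral_prod_right']
    refine lintegral_congr fun ω => ?_
    have hω : Measurable fun a => F (Fin.snoc ω a) := hF'.comp measurable_prodMk_left
    rw [lintegral_withDensity_eq_lintegral_mul _ hp hω, ← lintegral_const_mul _ (hp.mul hω)]
    refine lintegral_congr fun a => ?_
    simp only [Fin.prod_univ_castSucc, Fin.snoc_castSucc, Fin.snoc_last, Pi.mul_apply, mul_assoc]

/-- A two-point testing bound: the sum of the error probabilities of a test between two product
measures is bounded below through the affinity of the two densities. -/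
theorem affinity_pow_le (μ : Measure α) [SFinite μ] {p p' : α → ℝ} (hp0 : ∀ a, 0 ≤ p a)
    (hp0' : ∀ a, 0 ≤ p' a) (hp : Measurable p) (hp' : Measurable p')
    [IsProbabilityMeasure (μ.withDensity fun a => ENNReal.ofReal (p a))]
    [IsProbabilityMeasure (μ.withDensity fun a => ENNReal.ofReal (p' a))]
    {n : ℕ} {E : Set (Fin n → α)} (hE : MeasurableSet E) :
    (∫⁻ a, ENNReal.ofReal (√(p a * p' a)) ∂μ) ^ n ≤
      iid (μ.withDensity fun a => ENNReal.ofReal (p a)) n E +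
        iid (μ.withDensity fun a => ENNReal.ofReal (p' a)) n Eᶜ + ENNReal.ofReal (1 / 2) := by
  set P := μ.withDensity fun a => ENNReal.ofReal (p a)
  set P' := μ.withDensity fun a => ENNReal.ofReal (p' a)
  have hone : ∀ (ν : Measure (Fin n → α)) [IsProbabilityMeasure ν],
      ∫⁻ _, ENNReal.ofReal (1 / 4) ∂ν = ENNReal.ofReal (1 / 4) := fun ν _ => by simp
  have hsplit : iid P n E + iid P' n Eᶜ + ENNReal.ofReal (1 / 2) =
      ∫⁻ ω, (E.indicator 1 ω + ENNReal.ofReal (1 / 4)) ∂iid P n +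
        ∫⁻ ω, (Eᶜ.indicator 1 ω + ENNReal.ofReal (1 / 4)) ∂iid P' n := by
    rw [lintegral_add_right _ measurable_const, lintegral_add_right _ measurable_const,
      lintegral_indicator_one hE, lintegral_indicator_one hE.compl, hone, hone,
      add_add_add_comm, ← ENNReal.ofReal_add (by norm_num) (by norm_num)]
    norm_num
  have hm : Measurable fun ω => E.indicator (1 : (Fin n → α) → ℝ≥0∞) ω + ENNReal.ofReal (1 / 4) :=
    (measurable_one.indicator hE).add_const _
  have hm' : Measurable fun ω =>
      Eᶜ.indicator (1 : (Fin n → α) → ℝ≥0∞) ω + ENNReal.ofReal (1 / 4) :=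
    (measurable_one.indicator hE.compl).add_const _
  rw [hsplit, lintegral_iid_withDensity μ hp.ennreal_ofReal hm,
    lintegral_iid_withDensity μ hp'.ennreal_ofReal hm',
    ← lintegral_add_left (by fun_prop), ← lintegral_iid_prod μ (by fun_prop)]
  refine lintegral_mono fun ω => ?_
  simp only [← ENNReal.ofReal_prod_of_nonneg fun i _ => hp0 (ω i),
    ← ENNReal.ofReal_prod_of_nonneg fun i _ => hp0' (ω i),
    ← ENNReal.ofReal_prod_of_nonneg fun i _ => Real.sqrt_nonneg (p (ω i) * p' (ω i))]
  have hsqrt : ∏ i, √(p (ω i) * p' (ω i)) = √(∏ i, p (ω i)) * √(∏ i, p' (ω i)) := by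
    rw [← Real.sqrt_mul (Finset.prod_nonneg fun i _ => hp0 _), ← Finset.prod_mul_distrib,
      Real.sqrt_prod _ fun i _ => mul_nonneg (hp0 _) (hp0' _)]
  rw [hsqrt]
  have hs : 0 ≤ ∏ i, p (ω i) := Finset.prod_nonneg fun i _ => hp0 _
  have ht : 0 ≤ ∏ i, p' (ω i) := Finset.prod_nonneg fun i _ => hp0' _
  generalize ∏ i, p (ω i) = s at hs
  generalize ∏ i, p' (ω i) = t at ht
  have hs2 := Real.sq_sqrt hs
  have ht2 := Real.sq_sqrt ht
  by_cases h : ω ∈ E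
  · simp only [h, indicator_of_mem, Pi.one_apply, mem_compl_iff, not_true_eq_false,
      not_false_eq_true, indicator_of_notMem, zero_add, ← ENNReal.ofReal_one]
    rw [← ENNReal.ofReal_add (by norm_num) (by norm_num), ← ENNReal.ofReal_mul hs,
      ← ENNReal.ofReal_mul ht, ← ENNReal.ofReal_add (by positivity) (by positivity)]
    refine ENNReal.ofReal_le_ofReal ?_
    nlinarith [sq_nonneg (2 * √s - √t)]
  · simp only [h, indicator_of_mem, Pi.one_apply, mem_compl_iff, not_false_eq_true,
      indicator_of_notMem, zero_add, ← ENNReal.ofReal_one]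
    rw [← ENNReal.ofReal_add (by norm_num) (by norm_num), ← ENNReal.ofReal_mul hs,
      ← ENNReal.ofReal_mul ht, ← ENNReal.ofReal_add (by positivity) (by positivity)]
    refine ENNReal.ofReal_le_ofReal ?_
    nlinarith [sq_nonneg (√s - 2 * √t)]

end iid

/-! ## Joint distributions and classification risk -/

section joint

variable {d : ℕ} {η : (Fin d → ℝ) → ℝ} {Q : Measure (Fin d → ℝ)}

theorem lintegral_jointMeasure (hη : Measurable η) {F : (Fin d → ℝ) × ℝ → ℝ≥0∞}
    (hF : Measurable F) :
    ∫⁻ p, F p ∂jointMeasure η Q =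
      ∫⁻ x, (ENNReal.ofReal (η x) * F (x, 1) + ENNReal.ofReal (1 - η x) * F (x, -1)) ∂Q := by
  have hker : Measurable fun x : Fin d → ℝ =>
      ENNReal.ofReal (η x) • Measure.dirac (x, (1 : ℝ)) +
        ENNReal.ofReal (1 - η x) • Measure.dirac (x, (-1 : ℝ)) := by
    refine Measure.measurable_of_measurable_coe _ fun s hs => ?_
    simp only [Measure.add_apply, Measure.smul_apply, smul_eq_mul, Measure.dirac_apply' _ hs]
    have h1 : ∀ y : ℝ, Measurable fun x : Fin d → ℝ => s.indicator (fun _ => (1 : ℝ≥0∞)) (x, y) :=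
      fun y => (measurable_const.indicator hs).comp measurable_prodMk_right
    exact (hη.ennreal_ofReal.mul (h1 _)).add ((measurable_const.sub hη).ennreal_ofReal.mul (h1 _))
  rw [jointMeasure, Measure.lintegral_bind hker.aemeasurable hF.aemeasurable]
  refine lintegral_congr fun x => ?_
  rw [lintegral_add_measure, lintegral_smul_measure, lintegral_smul_measure,
    lintegral_dirac' _ hF, lintegral_dirac' _ hF, smul_eq_mul, smul_eq_mul]

theorem isProbabilityMeasure_jointMeasure [IsProbabilityMeasure Q] (hη : Measurable η)
    (hη01 : ∀ x, η x ∈ Icc (0 : ℝ) 1) : IsProbabilityMeasure (jointMeasure η Q) := by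
  refine ⟨?_⟩
  rw [← lintegral_one, lintegral_jointMeasure hη measurable_const]
  simp only [mul_one, ← ENNReal.ofReal_add (hη01 _).1 (sub_nonneg.2 (hη01 _).2)]
  simp

/-- The density of `jointMeasure η Q` with respect to the product of `Q` with the counting measure
on the labels. -/
def labelDensity (η : (Fin d → ℝ) → ℝ) (p : (Fin d → ℝ) × ℝ) : ℝ :=
  if p.2 = 1 then η p.1 else 1 - η p.1

theorem measurable_labelDensity (hη : Measurable η) : Measurable (labelDensity η) :=
  Measurable.ite (measurable_snd (measurableSet_singleton 1)) (hη.comp measurable_fst)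
    (measurable_const.sub (hη.comp measurable_fst))

theorem labelDensity_nonneg (hη01 : ∀ x, η x ∈ Icc (0 : ℝ) 1) (p : (Fin d → ℝ) × ℝ) :
    0 ≤ labelDensity η p := by
  unfold labelDensity
  split_ifs
  · exact (hη01 _).1
  · exact sub_nonneg.2 (hη01 _).2

theorem lintegral_prod_labels [SFinite Q] {F : (Fin d → ℝ) × ℝ → ℝ≥0∞} (hF : Measurable F) :
    ∫⁻ p, F p ∂Q.prod (Measure.dirac (1 : ℝ) + Measure.dirac (-1)) =
      ∫⁻ x, (F (x, 1) + F (x, -1)) ∂Q := by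
  rw [lintegral_prod _ hF.aemeasurable]
  refine lintegral_congr fun x => ?_
  have hx : Measurable fun y => F (x, y) := hF.comp measurable_prodMk_left
  rw [lintegral_add_measure, lintegral_dirac' _ hx, lintegral_dirac' _ hx]

theorem jointMeasure_eq_withDensity [SFinite Q] (hη : Measurable η) :
    jointMeasure η Q = (Q.prod (Measure.dirac (1 : ℝ) + Measure.dirac (-1))).withDensity
      fun p => ENNReal.ofReal (labelDensity η p) := by
  refine Measure.ext_of_lintegral _ fun F hF => ?_
  have hden := (measurable_labelDensity hη).ennreal_ofReal
  rw [lintegral_jointMeasure hη hF, lintegral_withDensity_eq_lintegral_mul _ hden hF,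
    lintegral_prod_labels (hden.mul hF)]
  refine lintegral_congr fun x => ?_
  have h : ((-1 : ℝ) = 1) = False := by norm_num
  simp [labelDensity, h]

theorem sgn_ne_one {t : ℝ} : sgn t ≠ 1 ↔ ¬ 0 ≤ t := by
  unfold sgn
  split_ifs with h <;> simp [h]
  norm_num

theorem sgn_ne_neg_one {t : ℝ} : sgn t ≠ -1 ↔ 0 ≤ t := by
  unfold sgn
  split_ifs with h <;> simp [h]
  norm_num

theorem measurable_sgn : Measurable sgn :=
  Measurable.ite measurableSet_Ici measurable_const measurable_const

/-- The probability of misclassifying at a point with conditional class probability `t`. -/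
def pointRisk (t v : ℝ) : ℝ := if 0 ≤ v then 1 - t else t

theorem risk01_jointMeasure [IsProbabilityMeasure Q] (hη : Measurable η)
    (hη01 : ∀ x, η x ∈ Icc (0 : ℝ) 1) {f : (Fin d → ℝ) → ℝ} (hf : Measurable f) :
    risk01 (jointMeasure η Q) f = ∫ x, pointRisk (η x) (f x) ∂Q := by
  have hS : MeasurableSet {p : (Fin d → ℝ) × ℝ | sgn (f p.1) ≠ p.2} :=
    (measurableSet_eq_fun (measurable_sgn.comp (hf.comp measurable_fst)) measurable_snd).compl
  rw [risk01, ← lintegral_indicator_one hS,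
    lintegral_jointMeasure hη (measurable_one.indicator hS), integral_eq_lintegral_of_nonneg_ae]
  · congr 1
    refine lintegral_congr fun x => ?_
    simp only [indicator_apply, mem_ofPred_eq, sgn_ne_one, sgn_ne_neg_one, pointRisk]
    split_ifs <;> simp
  · refine Filter.Eventually.of_forall fun x => ?_
    simp only [pointRisk, Pi.zero_apply]
    split_ifs
    · exact sub_nonneg.2 (hη01 x).2
    · exact (hη01 x).1
  · exact (Measurable.ite (hf measurableSet_Ici) (measurable_const.sub hη)
      hη).aestronglyMeasurable

theorem integrable_pointRisk [IsProbabilityMeasure Q] (hη : Measurable η)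
    (hη01 : ∀ x, η x ∈ Icc (0 : ℝ) 1) {f : (Fin d → ℝ) → ℝ} (hf : Measurable f) :
    Integrable (fun x => pointRisk (η x) (f x)) Q := by
  refine Integrable.of_bound (C := 1) (Measurable.ite (hf measurableSet_Ici)
    (measurable_const.sub hη) hη).aestronglyMeasurable (Filter.Eventually.of_forall fun x => ?_)
  have h := hη01 x
  rw [Real.norm_eq_abs, pointRisk, abs_le]
  split_ifs <;> constructor <;> linarith [h.1, h.2]

theorem bayes01_le (P : Measure ((Fin d → ℝ) × ℝ)) {g : (Fin d → ℝ) → ℝ} (hg : Measurable g) :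
    bayes01 P ≤ risk01 P g :=
  ciInf_le (f := fun g : {g : (Fin d → ℝ) → ℝ // Measurable g} => risk01 P g.1)
    ⟨0, by rintro _ ⟨g, rfl⟩; exact ENNReal.toReal_nonneg⟩ ⟨g, hg⟩

theorem bayes01_nonneg (P : Measure ((Fin d → ℝ) × ℝ)) : 0 ≤ bayes01 P :=
  Real.iInf_nonneg fun _ => ENNReal.toReal_nonneg

theorem excess01_nonneg (P : Measure ((Fin d → ℝ) × ℝ)) {g : (Fin d → ℝ) → ℝ}
    (hg : Measurable g) : 0 ≤ excess01 P g := sub_nonneg.2 (bayes01_le P hg)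

theorem excess01_le_one (P : Measure ((Fin d → ℝ) × ℝ)) [IsProbabilityMeasure P]
    (g : (Fin d → ℝ) → ℝ) : excess01 P g ≤ 1 := by
  have h : risk01 P g ≤ 1 := by
    rw [risk01]
    exact ENNReal.toReal_le_of_le_ofReal zero_le_one (by simpa using prob_le_one)
  linarith [bayes01_nonneg P, show excess01 P g = risk01 P g - bayes01 P from rfl]

/-- A lower bound of the excess risk by any lower bound `u` of the pointwise excess risk. -/
theorem lintegral_le_excess01 [IsProbabilityMeasure Q] (hη : Measurable η)
    (hη01 : ∀ x, η x ∈ Icc (0 : ℝ) 1) {f : (Fin d → ℝ) → ℝ} (hf : Measurable f)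
    {u : (Fin d → ℝ) → ℝ≥0∞}
    (hu : ∀ x, u x ≤ ENNReal.ofReal (pointRisk (η x) (f x) - pointRisk (η x) (η x - 1 / 2))) :
    ∫⁻ x, u x ∂Q ≤ ENNReal.ofReal (excess01 (jointMeasure η Q) f) := by
  have hg : Measurable fun x => η x - 1 / 2 := hη.sub_const _
  have h1 := integrable_pointRisk (Q := Q) hη hη01 hf
  have h2 := integrable_pointRisk (Q := Q) hη hη01 hg
  have hnonneg : ∀ x, 0 ≤ pointRisk (η x) (f x) - pointRisk (η x) (η x - 1 / 2) := fun x => by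
    simp only [pointRisk]
    split_ifs <;> linarith
  calc ∫⁻ x, u x ∂Q
      ≤ ∫⁻ x, ENNReal.ofReal (pointRisk (η x) (f x) - pointRisk (η x) (η x - 1 / 2)) ∂Q :=
        lintegral_mono hu
    _ = ENNReal.ofReal (∫ x, (pointRisk (η x) (f x) - pointRisk (η x) (η x - 1 / 2)) ∂Q) :=
        (ofReal_integral_eq_lintegral_ofReal (h1.sub h2)
          (Filter.Eventually.of_forall hnonneg)).symm
    _ ≤ ENNReal.ofReal (excess01 (jointMeasure η Q) f) := by
        refine ENNReal.ofReal_le_ofReal ?_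
        rw [integral_sub h1 h2, ← risk01_jointMeasure hη hη01 hf,
          ← risk01_jointMeasure hη hη01 hg, excess01]
        linarith [bayes01_le (jointMeasure η Q) hg]

theorem Estimator.Meas.measurable_apply {n : ℕ} {A : Estimator d n} (hA : A.Meas)
    (ω : Fin n → (Fin d → ℝ) × ℝ) : Measurable (A ω) := by
  unfold Estimator.Meas at hA
  exact hA.comp measurable_prodMk_left

theorem integrable_excess01 (P : Measure ((Fin d → ℝ) × ℝ)) [IsProbabilityMeasure P] {n : ℕ}
    {A : Estimator d n} (hA : A.Meas) :
    Integrable (fun ω => excess01 P (A ω)) (iid P n) := by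
  have hA' : Measurable fun p : (Fin n → (Fin d → ℝ) × ℝ) × (Fin d → ℝ) => A p.1 p.2 := hA
  have hset : MeasurableSet {p : (Fin n → (Fin d → ℝ) × ℝ) × ((Fin d → ℝ) × ℝ) |
      sgn (A p.1 p.2.1) ≠ p.2.2} := by
    refine (measurableSet_eq_fun (measurable_sgn.comp (hA'.comp
      (measurable_fst.prodMk (measurable_fst.comp measurable_snd)))) ?_).compl
    exact measurable_snd.comp measurable_snd
  have hm : Measurable fun ω => excess01 P (A ω) :=
    (measurable_measure_prodMk_left (ν := P) hset).ennreal_toReal.sub_const _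
  refine Integrable.of_bound (C := 1) hm.aestronglyMeasurable
    (Filter.Eventually.of_forall fun ω => ?_)
  rw [Real.norm_eq_abs, abs_of_nonneg (excess01_nonneg P (hA.measurable_apply ω))]
  exact excess01_le_one P _

theorem expectedExcess01_le_one (P : Measure ((Fin d → ℝ) × ℝ)) [IsProbabilityMeasure P] {n : ℕ}
    {A : Estimator d n} (hA : A.Meas) : expectedExcess01 P A ≤ 1 :=
  (integral_mono (integrable_excess01 P hA) (integrable_const 1)
    fun _ => excess01_le_one P _).trans (by simp)

theorem ofReal_expectedExcess01 (P : Measure ((Fin d → ℝ) × ℝ)) [IsProbabilityMeasure P] {n : ℕ}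
    {A : Estimator d n} (hA : A.Meas) :
    ENNReal.ofReal (expectedExcess01 P A) = ∫⁻ ω, ENNReal.ofReal (excess01 P (A ω)) ∂iid P n :=
  ofReal_integral_eq_lintegral_ofReal (integrable_excess01 P hA)
    (Filter.Eventually.of_forall fun ω => excess01_nonneg P (hA.measurable_apply ω))

theorem sub_sq_le_sqrt_mul {x y : ℝ} (hx : 1 / 4 ≤ x) (hy : 1 / 4 ≤ y) (hx' : x ≤ 3 / 4)
    (hy' : y ≤ 3 / 4) : (x + y) / 2 - (x - y) ^ 2 ≤ √(x * y) := by
  refine Real.le_sqrt_of_sq_le ?_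
  have hD : (x - y) ^ 2 ≤ x + y - 1 / 4 := by nlinarith
  nlinarith [mul_nonneg (sq_nonneg (x - y)) (sub_nonneg.2 hD)]

/-- The affinity of two joint distributions whose conditional class probabilities are within
`τ` of `1/2` and differ on the set `S` only. -/
theorem le_affinity [IsProbabilityMeasure Q] (hη : Measurable η) {η' : (Fin d → ℝ) → ℝ}
    (hη' : Measurable η') {τ v : ℝ} (hτ0 : 0 ≤ τ) (hτ : τ ≤ 1 / 4)
    (hητ : ∀ x, η x ∈ Icc (1 / 2 - τ) (1 / 2 + τ)) (hητ' : ∀ x, η' x ∈ Icc (1 / 2 - τ) (1 / 2 + τ))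
    {S : Set (Fin d → ℝ)} (hS : MeasurableSet S) (hdiff : ∀ x ∉ S, η x = η' x)
    (hv : Q.real S ≤ v) :
    ENNReal.ofReal (1 - 8 * τ ^ 2 * v) ≤
      ∫⁻ p, ENNReal.ofReal (√(labelDensity η p * labelDensity η' p))
        ∂Q.prod (Measure.dirac (1 : ℝ) + Measure.dirac (-1)) := by
  have hden := measurable_labelDensity hη
  have hden' := measurable_labelDensity hη'
  rw [lintegral_prod_labels (by fun_prop)]
  have hint : Integrable (fun x => 1 - S.indicator (fun _ => 8 * τ ^ 2) x) Q :=
    (integrable_const _).sub ((integrable_const _).indicator hS)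
  have hpt : ∀ x, 1 - S.indicator (fun _ => 8 * τ ^ 2) x ≤
      √(η x * η' x) + √((1 - η x) * (1 - η' x)) := fun x => by
    have h := hητ x
    have h' := hητ' x
    have e1 := sub_sq_le_sqrt_mul (x := η x) (y := η' x) (by linarith [h.1]) (by linarith [h'.1])
      (by linarith [h.2]) (by linarith [h'.2])
    have e2 := sub_sq_le_sqrt_mul (x := 1 - η x) (y := 1 - η' x) (by linarith [h.2])
      (by linarith [h'.2]) (by linarith [h.1]) (by linarith [h'.1])
    have e3 : 1 - 2 * (η x - η' x) ^ 2 ≤ √(η x * η' x) + √((1 - η x) * (1 - η' x)) := by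
      nlinarith
    refine le_trans ?_ e3
    by_cases hx : x ∈ S
    · rw [indicator_of_mem hx]
      have : (η x - η' x) ^ 2 ≤ (2 * τ) ^ 2 :=
        sq_le_sq' (by linarith [h.1, h'.2]) (by linarith [h.2, h'.1])
      linarith
    · rw [indicator_of_notMem hx, hdiff x hx]
      simp
  have hreal : 1 - 8 * τ ^ 2 * v ≤ ∫ x, (1 - S.indicator (fun _ => 8 * τ ^ 2) x) ∂Q := by
    rw [integral_sub (integrable_const _) ((integrable_const _).indicator hS),
      integral_indicator_const _ hS]
    simp only [integral_const, probReal_univ, smul_eq_mul, one_mul]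
    nlinarith [sq_nonneg τ]
  calc ENNReal.ofReal (1 - 8 * τ ^ 2 * v)
      ≤ ENNReal.ofReal (∫ x, (1 - S.indicator (fun _ => 8 * τ ^ 2) x) ∂Q) :=
        ENNReal.ofReal_le_ofReal hreal
    _ = ∫⁻ x, ENNReal.ofReal (1 - S.indicator (fun _ => 8 * τ ^ 2) x) ∂Q := by
        refine ofReal_integral_eq_lintegral_ofReal hint (Filter.Eventually.of_forall fun x => ?_)
        have : S.indicator (fun _ => 8 * τ ^ 2) x ≤ 8 * τ ^ 2 :=
          indicator_le_self' (fun _ _ => by positivity) x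
        simp only [Pi.zero_apply]
        nlinarith
    _ ≤ _ := by
        refine lintegral_mono fun x => ?_
        have h : ((-1 : ℝ) = 1) = False := by norm_num
        simp only [labelDensity, h, if_true, if_false]
        rw [← ENNReal.ofReal_add (Real.sqrt_nonneg _) (Real.sqrt_nonneg _)]
        exact ENNReal.ofReal_le_ofReal (hpt x)

end joint

/-! ## A hypercube lower bound for the expected excess risk -/

section hypercube

variable {d : ℕ} {Q : Measure (Fin d → ℝ)} [IsProbabilityMeasure Q] {ι : Type*} [Fintype ι]
  [DecidableEq ι]

theorem one_quarter_le_error_add_error {η η' : (Fin d → ℝ) → ℝ} (hη : Measurable η)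
    (hη' : Measurable η') {τ v : ℝ} (hτ0 : 0 ≤ τ) (hτ : τ ≤ 1 / 4)
    (hητ : ∀ x, η x ∈ Icc (1 / 2 - τ) (1 / 2 + τ)) (hητ' : ∀ x, η' x ∈ Icc (1 / 2 - τ) (1 / 2 + τ))
    {S : Set (Fin d → ℝ)} (hS : MeasurableSet S) (hdiff : ∀ x ∉ S, η x = η' x)
    (hv : Q.real S ≤ v) {n : ℕ} (hn : n * (8 * τ ^ 2 * v) ≤ 1 / 4)
    {E : Set (Fin n → (Fin d → ℝ) × ℝ)} (hE : MeasurableSet E) :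
    ENNReal.ofReal (1 / 4) ≤ iid (jointMeasure η Q) n E + iid (jointMeasure η' Q) n Eᶜ := by
  have h01 : ∀ x, η x ∈ Icc (0 : ℝ) 1 := fun x =>
    Icc_subset_Icc (by linarith) (by linarith) (hητ x)
  have h01' : ∀ x, η' x ∈ Icc (0 : ℝ) 1 := fun x =>
    Icc_subset_Icc (by linarith) (by linarith) (hητ' x)
  have hP := isProbabilityMeasure_jointMeasure (Q := Q) hη h01
  have hP' := isProbabilityMeasure_jointMeasure (Q := Q) hη' h01'
  rw [jointMeasure_eq_withDensity hη] at hP ⊢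
  rw [jointMeasure_eq_withDensity hη'] at hP' ⊢
  have htest := affinity_pow_le (Q.prod (Measure.dirac (1 : ℝ) + Measure.dirac (-1)))
    (labelDensity_nonneg h01) (labelDensity_nonneg h01') (measurable_labelDensity hη)
    (measurable_labelDensity hη') hE
  have haff := pow_le_pow_left₀ zero_le
    (le_affinity hη hη' hτ0 hτ hητ hητ' hS hdiff hv) n
  have hv0 : 0 ≤ v := measureReal_nonneg.trans hv
  have hpow : ENNReal.ofReal (3 / 4) ≤ ENNReal.ofReal (1 - 8 * τ ^ 2 * v) ^ n := by
    rcases Nat.eq_zero_or_pos n with rfl | hn0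
    · simp only [pow_zero, ENNReal.ofReal_le_one]
      norm_num
    have hn1 : (1 : ℝ) ≤ n := by exact_mod_cast hn0
    have hx : 0 ≤ 8 * τ ^ 2 * v := by positivity
    have hx1 : 8 * τ ^ 2 * v ≤ 1 / 4 := by nlinarith
    rw [← ENNReal.ofReal_pow (by linarith)]
    refine ENNReal.ofReal_le_ofReal ?_
    have := one_add_mul_le_pow (a := -(8 * τ ^ 2 * v)) (by linarith) n
    rw [← sub_eq_add_neg] at this
    linarith
  have hsum : ENNReal.ofReal (3 / 4) = ENNReal.ofReal (1 / 4) + ENNReal.ofReal (1 / 2) := by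
    rw [← ENNReal.ofReal_add (by norm_num) (by norm_num)]
    norm_num
  have := (hpow.trans haff).trans htest
  rw [hsum] at this
  exact (ENNReal.add_le_add_iff_right ENNReal.ofReal_ne_top).1 this

/-- Assouad's bound: if the conditional class probabilities `η σ`, indexed by the vertices of a
hypercube, equal `1/2 ± τ` on disjoint sets `T k` according to the sign of `σ k`, and flipping
`σ k` changes `η σ` only on a set of small measure, then every estimator has a large expected
excess risk for some `σ`. -/
theorem exists_le_expectedExcess01 {η : (ι → Bool) → (Fin d → ℝ) → ℝ} {T S : ι → Set (Fin d → ℝ)}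
    {τ v : ℝ} {w : ℝ≥0∞} (hτ0 : 0 < τ) (hτ : τ ≤ 1 / 4) (hη : ∀ σ, Measurable (η σ))
    (hητ : ∀ σ x, η σ x ∈ Icc (1 / 2 - τ) (1 / 2 + τ))
    (hT : ∀ k, MeasurableSet (T k)) (hTdisj : ∀ k k' x, x ∈ T k → x ∈ T k' → k = k')
    (hon : ∀ σ k, ∀ x ∈ T k, η σ x = if σ k then 1 / 2 + τ else 1 / 2 - τ)
    (hS : ∀ k, MeasurableSet (S k))
    (hoff : ∀ σ σ' k, (∀ k' ≠ k, σ k' = σ' k') → ∀ x ∉ S k, η σ x = η σ' x)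
    (hv : ∀ k, Q.real (S k) ≤ v) (hw : ∀ k, w ≤ Q (T k)) {n : ℕ}
    (hn : n * (8 * τ ^ 2 * v) ≤ 1 / 4) {A : Estimator d n} (hA : A.Meas) :
    ∃ σ : ι → Bool, ENNReal.ofReal (2 * τ) * (ENNReal.ofReal (1 / 8) * (Fintype.card ι * w)) ≤
      ENNReal.ofReal (expectedExcess01 (jointMeasure (η σ) Q) A) := by
  have h01 : ∀ σ x, η σ x ∈ Icc (0 : ℝ) 1 := fun σ x =>
    Icc_subset_Icc (by linarith) (by linarith) (hητ σ x)
  have hP : ∀ σ, IsProbabilityMeasure (jointMeasure (η σ) Q) := fun σ =>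
    isProbabilityMeasure_jointMeasure (hη σ) (h01 σ)
  have hA' : Measurable fun p : (Fin n → (Fin d → ℝ) × ℝ) × (Fin d → ℝ) => A p.1 p.2 := hA
  let err : Bool → Set ((Fin n → (Fin d → ℝ) × ℝ) × (Fin d → ℝ)) :=
    fun b => if b then {p | ¬ 0 ≤ A p.1 p.2} else {p | 0 ≤ A p.1 p.2}
  have herr : ∀ b, MeasurableSet (err b) := fun b => by
    cases b
    · exact hA' measurableSet_Ici
    · exact (hA' measurableSet_Ici).compl
  have herr_not : ∀ b, err (!b) = (err b)ᶜ := fun b => by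
    cases b
    · rfl
    · exact (compl_compl _).symm
  let E : Bool → (Fin d → ℝ) → Set (Fin n → (Fin d → ℝ) × ℝ) :=
    fun b x => (fun ω => (ω, x)) ⁻¹' err b
  have hE : ∀ b x, MeasurableSet (E b x) := fun b x => measurable_prodMk_right (herr b)
  let u : (ι → Bool) → (Fin n → (Fin d → ℝ) × ℝ) → (Fin d → ℝ) → ℝ≥0∞ := fun σ ω x =>
    ENNReal.ofReal (2 * τ) * ∑ k, (T k).indicator 1 x * (err (σ k)).indicator 1 (ω, x)
  have hu : ∀ σ, Measurable (Function.uncurry (u σ)) := fun σ => by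
    refine measurable_const.mul (Finset.measurable_sum _ fun k _ => ?_)
    exact ((measurable_one.indicator (hT k)).comp measurable_snd).mul
      (measurable_one.indicator (herr _))
  have hu_le : ∀ σ ω x, u σ ω x ≤ ENNReal.ofReal
      (pointRisk (η σ x) (A ω x) - pointRisk (η σ x) (η σ x - 1 / 2)) := by
    intro σ ω x
    by_cases hx : ∃ k, x ∈ T k
    · obtain ⟨k, hk⟩ := hx
      have hsum : u σ ω x = ENNReal.ofReal (2 * τ) * (err (σ k)).indicator 1 (ω, x) := by
        simp only [u]
        rw [Finset.sum_eq_single k (fun k' _ hne => ?_) (fun h => absurd (Finset.mem_univ k) h),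
          indicator_of_mem hk, Pi.one_apply, one_mul]
        rw [indicator_of_notMem fun h => hne (hTdisj k' k x h hk), zero_mul]
      rw [hsum, hon σ k x hk]
      by_cases he : (ω, x) ∈ err (σ k)
      · rw [indicator_of_mem he, Pi.one_apply, mul_one]
        refine ENNReal.ofReal_le_ofReal ?_
        cases hσ : σ k
        · have he' : 0 ≤ A ω x := by simpa [err, hσ] using he
          have hneg : ¬ 0 ≤ 1 / 2 - τ - 1 / 2 := by linarith
          simp only [Bool.false_eq_true, if_false, pointRisk, if_pos he', if_neg hneg]
          linarith
        · have he' : ¬ 0 ≤ A ω x := by simpa [err, hσ] using he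
          have hpos : 0 ≤ 1 / 2 + τ - 1 / 2 := by linarith
          simp only [if_true, pointRisk, if_neg he', if_pos hpos]
          linarith
      · rw [indicator_of_notMem he, mul_zero]
        exact zero_le
    · have hsum : u σ ω x = 0 := by
        simp only [u]
        rw [Finset.sum_eq_zero fun k _ => ?_, mul_zero]
        rw [indicator_of_notMem fun h => hx ⟨k, h⟩, zero_mul]
      rw [hsum]
      exact zero_le
  have hlow : ∀ σ, ∫⁻ x, ENNReal.ofReal (2 * τ) * ∑ k, (T k).indicator 1 x *
      iid (jointMeasure (η σ) Q) n (E (σ k) x) ∂Q ≤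
        ENNReal.ofReal (expectedExcess01 (jointMeasure (η σ) Q) A) := by
    intro σ
    have hPσ := hP σ
    rw [ofReal_expectedExcess01 _ hA]
    calc ∫⁻ x, ENNReal.ofReal (2 * τ) * ∑ k, (T k).indicator 1 x *
          iid (jointMeasure (η σ) Q) n (E (σ k) x) ∂Q
        = ∫⁻ x, ∫⁻ ω, u σ ω x ∂iid (jointMeasure (η σ) Q) n ∂Q := by
          refine lintegral_congr fun x => ?_
          have hind : ∀ b, Measurable fun ω : Fin n → (Fin d → ℝ) × ℝ =>
              (err b).indicator (1 : _ × (Fin d → ℝ) → ℝ≥0∞) (ω, x) := fun b =>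
            (measurable_one.indicator (herr b)).comp measurable_prodMk_right
          simp only [u]
          rw [lintegral_const_mul _ (Finset.measurable_sum _ fun k _ => (hind _).const_mul _),
            lintegral_finsetSum _ fun k _ => (hind _).const_mul _]
          refine congrArg _ (Finset.sum_congr rfl fun k _ => ?_)
          rw [lintegral_const_mul _ (hind _), ← lintegral_indicator_one (hE _ _)]
          rfl
      _ = ∫⁻ ω, ∫⁻ x, u σ ω x ∂Q ∂iid (jointMeasure (η σ) Q) n :=
          (lintegral_lintegral_swap (hu σ).aemeasurable).symm
      _ ≤ _ := lintegral_mono fun ω =>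
          lintegral_le_excess01 (hη σ) (h01 σ) (hA.measurable_apply ω) (hu_le σ ω)
  have hflip : ∀ k x, Fintype.card (ι → Bool) * ENNReal.ofReal (1 / 8) ≤
      ∑ σ, iid (jointMeasure (η σ) Q) n (E (σ k) x) := by
    intro k x
    let flip : (ι → Bool) → ι → Bool := fun σ => Function.update σ k (!σ k)
    have hinv : Function.Involutive flip := fun σ => by simp [flip]
    have hpair : ∀ σ, ENNReal.ofReal (1 / 4) ≤ iid (jointMeasure (η σ) Q) n (E (σ k) x) +
        iid (jointMeasure (η (flip σ)) Q) n (E (flip σ k) x) := fun σ => by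
      have hcompl : E (flip σ k) x = (E (σ k) x)ᶜ := by
        simp only [E, flip, Function.update_self, herr_not, preimage_compl]
      rw [hcompl]
      refine one_quarter_le_error_add_error (hη _) (hη _) hτ0.le hτ (hητ _) (hητ _) (hS k)
        (hoff _ _ k fun k' hk' => ?_) (hv k) hn (hE _ _)
      simp [flip, hk']
    have hsum : ∑ σ, iid (jointMeasure (η (flip σ)) Q) n (E (flip σ k) x) =
        ∑ σ, iid (jointMeasure (η σ) Q) n (E (σ k) x) :=
      Equiv.sum_comp (hinv.toPerm flip) fun σ => iid (jointMeasure (η σ) Q) n (E (σ k) x)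
    have htwo := Finset.sum_le_sum fun σ (_ : σ ∈ Finset.univ) => hpair σ
    rw [Finset.sum_add_distrib, hsum, ← two_mul, Finset.sum_const, Finset.card_univ,
      nsmul_eq_mul, show (1 / 4 : ℝ) = 2 * (1 / 8) by norm_num,
      ENNReal.ofReal_mul (by norm_num), ENNReal.ofReal_ofNat, mul_left_comm] at htwo
    exact (ENNReal.mul_le_mul_iff_right (by norm_num) (by norm_num)).1 htwo
  by_contra! hcon
  refine (ENNReal.sum_lt_sum_of_nonempty Finset.univ_nonempty fun σ _ => hcon σ).not_ge ?_
  calc ∑ _σ : ι → Bool, ENNReal.ofReal (2 * τ) *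
        (ENNReal.ofReal (1 / 8) * (Fintype.card ι * w))
      = ENNReal.ofReal (2 * τ) *
          ∑ _k : ι, w * (Fintype.card (ι → Bool) * ENNReal.ofReal (1 / 8)) := by
        simp only [Finset.sum_const, Finset.card_univ, nsmul_eq_mul]
        ring
    _ ≤ ENNReal.ofReal (2 * τ) *
          ∑ k, Q (T k) * (Fintype.card (ι → Bool) * ENNReal.ofReal (1 / 8)) := by
        gcongr with k
        exact hw k
    _ = ∫⁻ x, ENNReal.ofReal (2 * τ) * ∑ k, (T k).indicator 1 x *
          (Fintype.card (ι → Bool) * ENNReal.ofReal (1 / 8)) ∂Q := by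
        have hind : ∀ k, Measurable ((T k).indicator (1 : (Fin d → ℝ) → ℝ≥0∞)) := fun k =>
          measurable_one.indicator (hT k)
        rw [lintegral_const_mul _ (Finset.measurable_sum _ fun k _ => (hind k).mul_const _),
          lintegral_finsetSum _ fun k _ => (hind k).mul_const _]
        simp only [lintegral_mul_const _ (hind _), lintegral_indicator_one (hT _)]
    _ ≤ ∫⁻ x, ∑ σ, ENNReal.ofReal (2 * τ) * ∑ k, (T k).indicator 1 x *
          iid (jointMeasure (η σ) Q) n (E (σ k) x) ∂Q := by
        refine lintegral_mono fun x => ?_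
        simp only
        rw [← Finset.mul_sum, Finset.sum_comm]
        gcongr with k
        rw [← Finset.mul_sum]
        gcongr
        exact hflip k x
    _ = ∑ σ, ∫⁻ x, ENNReal.ofReal (2 * τ) * ∑ k, (T k).indicator 1 x *
          iid (jointMeasure (η σ) Q) n (E (σ k) x) ∂Q := by
        refine lintegral_finsetSum _ fun σ _ => measurable_const.mul
          (Finset.measurable_sum _ fun k _ => (measurable_one.indicator (hT k)).mul ?_)
        have hPσ := hP σ
        exact measurable_measure_prodMk_right (herr (σ k))
    _ ≤ _ := Finset.sum_le_sum fun σ _ => hlow σ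

end hypercube

/-! ## The uniform distribution on the cube -/

/-- The uniform distribution on the unit cube. -/
def uniformCube (d : ℕ) : Measure (Fin d → ℝ) := volume.restrict (cube d)

theorem uniformCube_cube (d : ℕ) : uniformCube d (cube d) = 1 := by
  rw [uniformCube, Measure.restrict_apply_self, cube, volume_pi_pi]
  simp

instance isProbabilityMeasure_uniformCube (d : ℕ) : IsProbabilityMeasure (uniformCube d) :=
  ⟨by
    have h := uniformCube_cube d
    rwa [uniformCube, Measure.restrict_apply_self, ← Measure.restrict_apply_univ] at h⟩

theorem uniformCube_mem_MLam (d : ℕ) {Λ : ℝ} (hΛ : 1 ≤ Λ) : uniformCube d ∈ MLam d Λ := by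
  refine ⟨fun _ => 1, measurable_const, fun _ => ⟨zero_le_one, hΛ⟩, ?_⟩
  simp only [ENNReal.ofReal_one]
  exact withDensity_one.symm

/-- The cylinder over the box of radius `ρ` around the centre of the grid cell `k`. -/
def cellCylinder {d dstar N : ℕ} (hd : dstar ≤ d) (ρ : ℝ) (k : Fin dstar → Fin N) :
    Set (Fin d → ℝ) :=
  {x | cellCoord k (fun j => x (Fin.castLE hd j)) ∈ centerBox dstar ρ}

theorem measurableSet_cellCylinder {d dstar N : ℕ} (hd : dstar ≤ d) (ρ : ℝ)
    (k : Fin dstar → Fin N) : MeasurableSet (cellCylinder hd ρ k) := by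
  refine Metric.isClosed_closedBall.measurableSet.preimage
    ((contDiff_cellCoord k).continuous.measurable.comp ?_)
  fun_prop

theorem uniformCube_cellCylinder {d dstar N : ℕ} (hd : dstar ≤ d) {ρ : ℝ} (hρ0 : 0 ≤ ρ)
    (hρ : ρ ≤ 1 / 2) (k : Fin dstar → Fin N) :
    uniformCube d (cellCylinder hd ρ k) = ENNReal.ofReal (2 * ρ / N) ^ dstar := by
  obtain ⟨m, rfl⟩ := Nat.exists_eq_add_of_le hd
  let J : Fin dstar → Set ℝ := fun j =>
    Icc (((k j : ℕ) + 1 / 2 - ρ) / N) (((k j : ℕ) + 1 / 2 + ρ) / N)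
  have hJ : ∀ j, J j ⊆ Icc 0 1 := fun j => by
    have hk : ((k j : ℕ) : ℝ) + 1 ≤ N := by exact_mod_cast (k j).2
    have hk0 : (0 : ℝ) ≤ (k j : ℕ) := Nat.cast_nonneg _
    refine Icc_subset_Icc (div_nonneg (by linarith) (by linarith)) ?_
    rw [div_le_one (by linarith)]
    linarith
  have hmem : ∀ (x : Fin (dstar + m) → ℝ) (j : Fin dstar), |N * x (Fin.castLE hd j) - (k j : ℕ) -
      1 / 2| ≤ ρ ↔ x (Fin.castAdd m j) ∈ J j := fun x j => by
    have hN : (0 : ℝ) < N := by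
      have := (k j).2
      exact_mod_cast (by omega : 0 < N)
    have hcast : Fin.castLE hd j = Fin.castAdd m j := rfl
    rw [hcast, mem_Icc, div_le_iff₀ hN, le_div_iff₀ hN, abs_le]
    constructor <;> rintro ⟨h1, h2⟩ <;> constructor <;> linarith
  have hset : cellCylinder hd ρ k ∩ cube (dstar + m) =
      univ.pi (Fin.addCases J fun _ => Icc (0 : ℝ) 1) := by
    ext x
    simp only [cellCylinder, cube, mem_inter_iff, mem_ofPred_eq, mem_univ_pi, mem_centerBox hρ0,
      cellCoord, hmem]
    constructor
    · rintro ⟨h1, h2⟩ i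
      induction i using Fin.addCases with
      | left j => simpa using h1 j
      | right j => simpa using h2 (Fin.natAdd dstar j)
    · intro h
      have hl : ∀ j, x (Fin.castAdd m j) ∈ J j := fun j => by simpa using h (Fin.castAdd m j)
      refine ⟨hl, fun i => ?_⟩
      induction i using Fin.addCases with
      | left j => exact hJ j (hl j)
      | right j => simpa using h (Fin.natAdd dstar j)
  rw [uniformCube, Measure.restrict_apply (measurableSet_cellCylinder hd ρ k), hset, volume_pi_pi,
    Fin.prod_univ_add]
  have hvol : ∀ j, volume (J j) = ENNReal.ofReal (2 * ρ / N) := fun j => by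
    rw [Real.volume_Icc]
    congr 1
    ring
  simp [hvol]

/-! ## The hard distributions -/

section hard

variable {d dstar N : ℕ} (hd : dstar ≤ d) (q : ℕ) {c γ δ : ℝ}

/-- The distribution with conditional class probability `bumpEta` and uniform marginal. -/
def bumpDist (hc : 0 ≤ c) (hγ : 0 < γ) (hδ : 0 ≤ δ) (hle : (powMap c γ)^[q] δ ≤ 1)
    (σ : (Fin dstar → Fin N) → Bool) : DataDist d where
  η := bumpEta hd q c γ δ σ
  Q := uniformCube d
  η_meas := measurable_bumpEta hd q σ
  η_mem x := Icc_subset_Icc (by linarith) (by linarith) (bumpEta_mem_Icc hd q hc hγ hδ σ x)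
  Q_prob := inferInstance
  Q_cube := uniformCube_cube d

theorem bumpDist_mem_HCHL {K : ℕ} {β r Λ : ℝ} (hΛ : 1 ≤ Λ) (hc : 0 ≤ c) (hγ : 0 < γ)
    (hδ : 0 ≤ δ) (hle : (powMap c γ)^[q] δ ≤ 1) {σ : (Fin dstar → Fin N) → Bool}
    (hσ : bumpEta hd q c γ δ σ ∈ GCH K dstar β r q d) :
    bumpDist hd q hc hγ hδ hle σ ∈ HCHL d q K dstar β r Λ :=
  ⟨⟨_, hσ, fun x _ => (bumpDist hd q hc hγ hδ hle σ).η_mem x, Filter.Eventually.of_forall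
    fun _ => rfl⟩, uniformCube_mem_MLam d hΛ⟩

theorem exists_le_expectedExcess01_bumpDist (hN : 0 < N) (hc : 0 < c) (hγ : 0 < γ) (hδ : 0 < δ)
    (hle : (powMap c γ)^[q] δ ≤ 1 / 2) {n : ℕ}
    (hn : n * (2 * ((powMap c γ)^[q] δ) ^ 2 * (1 / N) ^ dstar) ≤ 1 / 4) {A : Estimator d n}
    (hA : A.Meas) : ∃ σ : (Fin dstar → Fin N) → Bool,
      (powMap c γ)^[q] δ * (1 / 8 * (1 / 3) ^ dstar) ≤ expectedExcess01
        (bumpDist hd q hc.le hγ hδ.le (hle.trans (by norm_num)) σ).P A := by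
  have hpos : 0 < (powMap c γ)^[q] δ := powMap_iterate_pos hc q hδ
  have hN0 : (0 : ℝ) < N := Nat.cast_pos.2 hN
  have hv : ∀ k : Fin dstar → Fin N,
      (uniformCube d).real (cellCylinder hd (1 / 3) k) ≤ (1 / N) ^ dstar := fun k => by
    rw [measureReal_def, uniformCube_cellCylinder hd (by norm_num) (by norm_num),
      ← ENNReal.ofReal_pow (by positivity), ENNReal.toReal_ofReal (by positivity)]
    gcongr
    norm_num
  obtain ⟨σ, hσ⟩ := exists_le_expectedExcess01 (Q := uniformCube d)
    (η := bumpEta hd q c γ δ) (T := cellCylinder hd (1 / 6)) (S := cellCylinder hd (1 / 3))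
    (τ := (powMap c γ)^[q] δ / 2) (v := (1 / N) ^ dstar)
    (w := ENNReal.ofReal (2 * (1 / 6) / N) ^ dstar) (by linarith) (by linarith)
    (measurable_bumpEta hd q) (bumpEta_mem_Icc hd q hc.le hγ hδ.le)
    (measurableSet_cellCylinder hd _)
    (fun k k' x hk hk' => cell_unique (by norm_num) (by norm_num) hk hk')
    (fun σ k x hx => bumpEta_of_mem hd q hγ σ hx) (measurableSet_cellCylinder hd _)
    (fun σ σ' k hk x hx => bumpEta_congr hd q hk hx)
    hv (fun k => (uniformCube_cellCylinder hd (by norm_num) (by norm_num) k).ge)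
    (le_of_eq_of_le (by ring) hn) hA
  refine ⟨σ, ?_⟩
  have hnonneg : 0 ≤ expectedExcess01
      (bumpDist hd q hc.le hγ hδ.le (hle.trans (by norm_num)) σ).P A :=
    integral_nonneg fun ω => excess01_nonneg _ (hA.measurable_apply ω)
  refine (ENNReal.ofReal_le_ofReal_iff hnonneg).1 (le_of_eq_of_le ?_ hσ)
  rw [Fintype.card_fun, Fintype.card_fin, Fintype.card_fin, Nat.cast_pow,
    ← ENNReal.ofReal_natCast, ← mul_pow, ← ENNReal.ofReal_mul hN0.le,
    ← ENNReal.ofReal_pow (by positivity), ← ENNReal.ofReal_mul (by norm_num),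
    ← ENNReal.ofReal_mul (by linarith)]
  congr 1
  field_simp
  norm_num

end hard

theorem DataDist.isProbabilityMeasure_P {d : ℕ} (D : DataDist d) : IsProbabilityMeasure D.P :=
  have := D.Q_prob
  isProbabilityMeasure_jointMeasure D.η_meas D.η_mem

theorem bddAbove_expectedExcess01 {d n : ℕ} {A : Estimator d n} (hA : A.Meas)
    (H : Set (DataDist d)) : BddAbove (range fun D : H => expectedExcess01 D.1.P A) := by
  refine ⟨1, ?_⟩
  rintro _ ⟨D, rfl⟩
  have := D.1.isProbabilityMeasure_P
  exact expectedExcess01_le_one _ hA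

/-- A grid size of the order `n ^ (1 / a)`. -/
theorem exists_grid_size {a e : ℝ} (ha : 0 < a) (he : 0 ≤ e) {n : ℕ} (hn : 0 < n) :
    ∃ N : ℕ, 0 < N ∧ (n : ℝ) * (N : ℝ) ^ (-a) ≤ 1 ∧
      2 ^ (-e) * (1 / n : ℝ) ^ (e / a) ≤ (N : ℝ) ^ (-e) := by
  have hn0 : (0 : ℝ) < n := Nat.cast_pos.2 hn
  have hroot : (1 : ℝ) ≤ (n : ℝ) ^ (1 / a) :=
    Real.one_le_rpow (by exact_mod_cast hn) (by positivity)
  have hN : 0 < ⌈(n : ℝ) ^ (1 / a)⌉₊ := Nat.ceil_pos.2 (by linarith)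
  have hN0 : (0 : ℝ) < ⌈(n : ℝ) ^ (1 / a)⌉₊ := Nat.cast_pos.2 hN
  refine ⟨_, hN, ?_, ?_⟩
  · rw [Real.rpow_neg hN0.le, ← div_eq_mul_inv, div_le_one (by positivity)]
    calc (n : ℝ) = ((n : ℝ) ^ (1 / a)) ^ a := by
          rw [← Real.rpow_mul hn0.le, one_div_mul_cancel ha.ne', Real.rpow_one]
      _ ≤ _ := Real.rpow_le_rpow (by positivity) (Nat.le_ceil _) ha.le
  · calc 2 ^ (-e) * (1 / n : ℝ) ^ (e / a) = (2 * (n : ℝ) ^ (1 / a)) ^ (-e) := by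
          rw [Real.mul_rpow (by norm_num) (by positivity), ← Real.rpow_mul hn0.le, one_div,
            Real.inv_rpow hn0.le, ← Real.rpow_neg hn0.le]
          congr 2
          ring
      _ ≤ _ := Real.rpow_le_rpow_of_nonpos hN0
          ((Nat.ceil_lt_add_one (by linarith)).le.trans (by linarith)) (by linarith)

/-- Theorem 4.2 : minimax lower bound without a noise condition. -/
theorem statement_6
    (dstar : ℕ) (hdstar : 0 < dstar) (β : ℝ) (hβ : 0 < β) (q : ℕ)
    (r : ℝ) (hr : 1 / 2 < r) :
    ∃ c10 : ℝ, 0 < c10 ∧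
      ∀ (d K : ℕ), 0 < d → 0 < K → ∀ (Λ : ℝ), 1 ≤ Λ →
        dstar * q ≤ K * q → dstar ≤ d → ∀ (n : ℕ), 0 < n →
        (⨅ A : {A : Estimator d n // A.Meas},
            ⨆ D : ↥(HCHL d q K dstar β r Λ), expectedExcess01 D.1.P A.1) ≥
          c10 * (1 / n : ℝ) ^
            ((β * min 1 β ^ q) / ((dstar : ℝ) + 2 * (β * min 1 β ^ q))) := by
  obtain ⟨b, c, hb0, hb, hc0, hc, hmem⟩ := exists_bumpEta_mem_GCH hdstar hβ hr q
  have hγ : 0 < min 1 β := by positivity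
  set e : ℝ := β * min 1 β ^ q with he_def
  have he : 0 < e := by positivity
  have hC0 : 0 < (powMap c (min 1 β))^[q] b := powMap_iterate_pos hc0 q hb0
  have hC1 : (powMap c (min 1 β))^[q] b ≤ 1 / 4 :=
    (powMap_iterate_mem_Icc hc0.le hγ.le hc (by norm_num) q ⟨hb0.le, hb⟩).2
  set C : ℝ := (powMap c (min 1 β))^[q] b
  refine ⟨C * 2 ^ (-e) * (1 / 8 * (1 / 3) ^ dstar), by positivity,
    fun d K _ _ Λ hΛ hK hd n hn => ?_⟩
  have : Nonempty {A : Estimator d n // A.Meas} :=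
    ⟨fun _ _ => 0, by unfold Estimator.Meas; exact measurable_const⟩
  refine le_ciInf fun ⟨A, hA⟩ => ?_
  obtain ⟨N, hN, hnN, hNe⟩ := exists_grid_size (a := dstar + 2 * e) (by positivity) he.le hn
  have hN0 : (0 : ℝ) < N := Nat.cast_pos.2 hN
  have hδ : (powMap c (min 1 β))^[q] (b * (N : ℝ) ^ (-β)) = C * (N : ℝ) ^ (-e) := by
    rw [powMap_iterate_mul hc0.le q hb0.le (by positivity), ← Real.rpow_mul hN0.le, neg_mul]
  have hNe1 : (N : ℝ) ^ (-e) ≤ 1 :=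
    Real.rpow_le_one_of_one_le_of_nonpos (by exact_mod_cast hN) (by linarith)
  have hsmall : (n : ℝ) * (2 * (C * (N : ℝ) ^ (-e)) ^ 2 * (1 / N) ^ dstar) ≤ 1 / 4 := by
    have hpow : ((N : ℝ) ^ (-e)) ^ 2 * (1 / N) ^ dstar = (N : ℝ) ^ (-(dstar + 2 * e)) := by
      rw [one_div, inv_pow, ← Real.rpow_natCast, ← Real.rpow_natCast, ← Real.rpow_neg hN0.le,
        ← Real.rpow_mul hN0.le, ← Real.rpow_add hN0]
      congr 1
      push_cast
      ring
    calc (n : ℝ) * (2 * (C * (N : ℝ) ^ (-e)) ^ 2 * (1 / N) ^ dstar)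
        = 2 * C ^ 2 * (n * (((N : ℝ) ^ (-e)) ^ 2 * (1 / N) ^ dstar)) := by ring
      _ ≤ 2 * C ^ 2 * 1 := by rw [hpow]; gcongr
      _ ≤ 1 / 4 := by nlinarith
  rw [← hδ] at hsmall
  have hle : (powMap c (min 1 β))^[q] (b * (N : ℝ) ^ (-β)) ≤ 1 / 2 := by
    rw [hδ]
    nlinarith
  have hδ0 : 0 < b * (N : ℝ) ^ (-β) := by positivity
  obtain ⟨σ, hσ⟩ := exists_le_expectedExcess01_bumpDist hd q hN hc0 hγ hδ0 hle hsmall hA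
  refine le_ciSup_of_le (bddAbove_expectedExcess01 hA _)
    ⟨_, bumpDist_mem_HCHL hd q hΛ hc0.le hγ hδ0.le (hle.trans (by norm_num))
      (hmem d K N hd hK hN σ)⟩ (le_trans ?_ hσ)
  rw [hδ]
  calc C * 2 ^ (-e) * (1 / 8 * (1 / 3) ^ dstar) * (1 / n : ℝ) ^ (e / (dstar + 2 * e))
      = C * (2 ^ (-e) * (1 / n : ℝ) ^ (e / (dstar + 2 * e))) * (1 / 8 * (1 / 3) ^ dstar) := by ring
    _ ≤ _ := by gcongr

end ZZS
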